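/- arXiv:1604.08639 — 7 statements merged into one kernel-verified Lean document; each statement's English description precedes it below -/
import Mathlib

section
/- Let R be a commutative ring with identity. If R has stable rank 1, i.e., for all a, b ∈ R with aR + bR = R there exists t ∈ R such that a + bt is a unit, then R is a generalized Euclidean ring: SL_n(R) = E_n(R) for every n ≥ 2. -/
/-!
The proof is by induction on the size `n`. Expanding `det A = 1` along the first column shows that
this column is unimodular, and stable rank 1 provides row operations which add multiples of the
lower rows to the top one so that the top left entry becomes a unit `u` (`exists_unit_corner`).
Using this unit, the entry below it can be turned into `1`, and then the corner itself into `1`.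
With corner `1`, the rest of the first column and of the first row are cleared by elementary
operations, leaving a block matrix `diag(1, B)` with `det B = 1`, to which the induction hypothesis
applies (`mem_of_corner_eq_one`).

All elementary operations are performed in bulk: `1 + eᵢ wᵀ` with `w i = 0` adds the combination
`w` of the rows to row `i`, and it is a product of elementary matrices since
`(1 + eᵢ wᵀ)(1 + eᵢ w'ᵀ) = 1 + eᵢ (w + w')ᵀ`. The transposes `1 + w eᵢᵀ` act dually.
-/

/-- The set of `n × n` elementary matrices over `R`: matrices differing from the
identity by a single off-diagonal entry. -/
def ElemMatrices (n : ℕ) (R : Type*) [CommRing R] : Set (Matrix (Fin n) (Fin n) R) :=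
  {M | ∃ (i j : Fin n) (c : R), i ≠ j ∧ M = Matrix.transvection i j c}

/-- `R` is a `GE_n`-ring: every matrix of determinant one is a product of
elementary matrices, i.e. `SL_n(R) = E_n(R)`. -/
def IsGE (R : Type*) [CommRing R] (n : ℕ) : Prop :=
  ∀ A : Matrix (Fin n) (Fin n) R, A.det = 1 → A ∈ Submonoid.closure (ElemMatrices n R)

/-- `R` is a generalized Euclidean ring: a `GE_n`-ring for every `n ≥ 2`. -/
def IsGERing (R : Type*) [CommRing R] : Prop := ∀ n, 2 ≤ n → IsGE R n

open Matrix

namespace StableRankOne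

variable {R : Type*} [CommRing R]

/-- The monoid generated by the elementary `n × n` matrices; it is in fact the group `E_n(R)`,
since the inverse of an elementary matrix is elementary. -/
abbrev E (n : ℕ) (R : Type*) [CommRing R] : Submonoid (Matrix (Fin n) (Fin n) R) :=
  Submonoid.closure (ElemMatrices n R)

lemma det_of_mem {n : ℕ} {A : Matrix (Fin n) (Fin n) R} (hA : A ∈ E n R) : A.det = 1 := by
  induction hA using Submonoid.closure_induction with
  | mem x hx =>
    obtain ⟨i, j, c, hij, rfl⟩ := hx
    exact det_transvection_of_ne i j hij c
  | one => exact det_one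
  | mul x y _ _ hx hy => rw [det_mul, hx, hy, one_mul]

lemma transpose_mem {n : ℕ} {A : Matrix (Fin n) (Fin n) R} (hA : A ∈ E n R) : Aᵀ ∈ E n R := by
  induction hA using Submonoid.closure_induction with
  | mem x hx =>
    obtain ⟨i, j, c, hij, rfl⟩ := hx
    refine Submonoid.subset_closure ⟨j, i, c, hij.symm, ?_⟩
    simp [transvection, transpose_add, transpose_single]
  | one => simp
  | mul x y _ _ hx hy =>
    rw [transpose_mul]
    exact mul_mem hy hx

/-- The matrix `1 + eᵢ wᵀ`, whose left action adds the combination `w` of the rows to row `i`. -/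
def rowOp {n : ℕ} (i : Fin n) (w : Fin n → R) : Matrix (Fin n) (Fin n) R :=
  1 + vecMulVec (Pi.single i 1) w

lemma rowOp_mul_apply_same {n : ℕ} (i : Fin n) (w : Fin n → R) (A : Matrix (Fin n) (Fin n) R)
    (k : Fin n) : (rowOp i w * A) i k = A i k + ∑ j, w j * A j k := by
  simp [rowOp, add_mul, vecMulVec_mul, vecMulVec_apply, vecMul, dotProduct]

lemma transpose_rowOp_mul_apply {n : ℕ} (i : Fin n) (w : Fin n → R)
    (A : Matrix (Fin n) (Fin n) R) (j k : Fin n) :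
    ((rowOp i w)ᵀ * A) j k = A j k + w j * A i k := by
  simp [rowOp, add_mul, transpose_vecMulVec, vecMulVec_mul, vecMulVec_apply]

lemma mul_rowOp_apply {n : ℕ} (i : Fin n) (w : Fin n → R)
    (A : Matrix (Fin n) (Fin n) R) (j k : Fin n) :
    (A * rowOp i w) j k = A j k + A j i * w k := by
  simp [rowOp, mul_add, mul_vecMulVec, vecMulVec_apply]

lemma rowOp_mul_rowOp {n : ℕ} (i : Fin n) (v w : Fin n → R) (hv : v i = 0) :
    rowOp i v * rowOp i w = rowOp i (v + w) := by
  ext j k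
  rw [mul_rowOp_apply]
  simp only [rowOp, Matrix.add_apply, vecMulVec_apply, hv, Pi.add_apply, one_apply]
  by_cases h : j = i <;> simp [h]
  ring

lemma rowOp_mem {n : ℕ} (i : Fin n) (w : Fin n → R) (hw : w i = 0) : rowOp i w ∈ E n R := by
  have key : ∀ s : Finset (Fin n), i ∉ s → rowOp i (∑ j ∈ s, Pi.single j (w j)) ∈ E n R := by
    intro s
    induction s using Finset.induction_on with
    | empty => intro _; simp [rowOp]
    | insert a s ha ih =>
      intro hi
      rw [Finset.mem_insert, not_or] at hi
      rw [Finset.sum_insert ha, ← rowOp_mul_rowOp _ _ _ (by simp [hi.1])]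
      refine mul_mem (Submonoid.subset_closure ⟨i, a, w a, hi.1, ?_⟩) (ih hi.2)
      ext j k
      simp only [rowOp, transvection, Matrix.add_apply, vecMulVec_apply, Pi.single_apply, single_apply]
      congr 1
      by_cases h1 : j = i <;> by_cases h2 : k = a <;>
        simp [h1, h2, @eq_comm _ i, @eq_comm _ a]
  have h : ∑ j ∈ Finset.univ.erase i, Pi.single j (w j) = w := by
    rw [Finset.sum_erase _ (by simp [hw])]
    exact Finset.univ_sum_single w
  exact h ▸ key _ (Finset.notMem_erase i _)

lemma rowOp_neg_mul {n : ℕ} (i : Fin n) (w : Fin n → R) (hw : w i = 0) :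
    rowOp i (-w) * rowOp i w = 1 := by
  rw [rowOp_mul_rowOp _ _ _ (by simp [hw])]
  simp [rowOp]

lemma rowOp_mul_neg {n : ℕ} (i : Fin n) (w : Fin n → R) (hw : w i = 0) :
    rowOp i w * rowOp i (-w) = 1 := by
  rw [rowOp_mul_rowOp _ _ _ hw]
  simp [rowOp]

lemma mem_of_rowOp_mul_mem {n : ℕ} {i : Fin n} {w : Fin n → R} (hw : w i = 0)
    {A : Matrix (Fin n) (Fin n) R} (h : rowOp i w * A ∈ E n R) : A ∈ E n R := by
  have := mul_mem (rowOp_mem i (-w) (by simp [hw])) h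
  rwa [← mul_assoc, rowOp_neg_mul i w hw, one_mul] at this

lemma mem_of_mul_rowOp_mem {n : ℕ} {i : Fin n} {w : Fin n → R} (hw : w i = 0)
    {A : Matrix (Fin n) (Fin n) R} (h : A * rowOp i w ∈ E n R) : A ∈ E n R := by
  have := mul_mem h (rowOp_mem i (-w) (by simp [hw]))
  rwa [mul_assoc, rowOp_mul_neg i w hw, mul_one] at this

lemma mem_of_transpose_rowOp_mul_mem {n : ℕ} {i : Fin n} {w : Fin n → R} (hw : w i = 0)
    {A : Matrix (Fin n) (Fin n) R} (h : (rowOp i w)ᵀ * A ∈ E n R) : A ∈ E n R := by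
  have h' := transpose_mem h
  rw [transpose_mul, transpose_transpose] at h'
  simpa using transpose_mem (mem_of_mul_rowOp_mem hw h')

lemma det_rowOp {n : ℕ} (i : Fin n) (w : Fin n → R) (hw : w i = 0) : (rowOp i w).det = 1 :=
  det_of_mem (rowOp_mem i w hw)

/-- The block matrix `diag(1, B)`. -/
def emb {n : ℕ} (B : Matrix (Fin n) (Fin n) R) : Matrix (Fin (n + 1)) (Fin (n + 1)) R :=
  Matrix.of (Fin.cons (Fin.cons 1 0) fun i => Fin.cons 0 (B i))

@[simp] lemma emb_zero_zero {n : ℕ} (B : Matrix (Fin n) (Fin n) R) : emb B 0 0 = 1 := rfl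

@[simp] lemma emb_zero_succ {n : ℕ} (B : Matrix (Fin n) (Fin n) R) (j : Fin n) :
    emb B 0 j.succ = 0 := rfl

@[simp] lemma emb_succ_zero {n : ℕ} (B : Matrix (Fin n) (Fin n) R) (i : Fin n) :
    emb B i.succ 0 = 0 := rfl

@[simp] lemma emb_succ_succ {n : ℕ} (B : Matrix (Fin n) (Fin n) R) (i j : Fin n) :
    emb B i.succ j.succ = B i j := rfl

lemma det_emb {n : ℕ} (B : Matrix (Fin n) (Fin n) R) : (emb B).det = B.det := by
  rw [det_succ_column_zero, Fin.sum_univ_succ]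
  simp only [emb_zero_zero, emb_succ_zero]
  simp only [Fin.val_zero, pow_zero, mul_one, one_mul, mul_zero, zero_mul, Finset.sum_const_zero,
    add_zero]
  rfl

lemma emb_mem {n : ℕ} {B : Matrix (Fin n) (Fin n) R} (hB : B ∈ E n R) : emb B ∈ E (n + 1) R := by
  induction hB using Submonoid.closure_induction with
  | mem x hx =>
    obtain ⟨i, j, c, hij, rfl⟩ := hx
    refine Submonoid.subset_closure ⟨i.succ, j.succ, c, by simpa using hij, ?_⟩
    ext a b
    refine Fin.cases ?_ (fun a => ?_) a <;> refine Fin.cases ?_ (fun b => ?_) b <;>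
      simp [transvection, single_apply, one_apply, Fin.succ_ne_zero, (Fin.succ_ne_zero _).symm]
  | one =>
    convert one_mem (E (n + 1) R)
    ext a b
    refine Fin.cases ?_ (fun a => ?_) a <;> refine Fin.cases ?_ (fun b => ?_) b <;>
      simp [one_apply, Fin.succ_ne_zero, (Fin.succ_ne_zero _).symm]
  | mul x y _ _ hx hy =>
    convert mul_mem hx hy
    ext a b
    refine Fin.cases ?_ (fun a => ?_) a <;> refine Fin.cases ?_ (fun b => ?_) b <;>
      simp [mul_apply, Fin.sum_univ_succ]

/-- Once the top left entry is `1`, the first column and row can be cleared. -/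
lemma mem_of_corner_eq_one {n : ℕ} (ih : IsGE R n) (A : Matrix (Fin (n + 1)) (Fin (n + 1)) R)
    (hA : A.det = 1) (h : A 0 0 = 1) : A ∈ E (n + 1) R := by
  let v : Fin (n + 1) → R := Fin.cons 0 fun i => -A i.succ 0
  let w : Fin (n + 1) → R := Fin.cons 0 fun j => -A 0 j.succ
  have hv : v 0 = 0 := rfl
  have hw : w 0 = 0 := rfl
  apply mem_of_transpose_rowOp_mul_mem hv
  apply mem_of_mul_rowOp_mem hw
  set C := (rowOp 0 v)ᵀ * A * rowOp 0 w with hC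
  have hdet : C.det = 1 := by
    rw [hC, det_mul, det_mul, det_transpose, det_rowOp _ _ hv, det_rowOp _ _ hw, hA]
    simp
  have hCe : C = emb (C.submatrix Fin.succ Fin.succ) := by
    ext a b
    refine Fin.cases ?_ (fun a => ?_) a <;> refine Fin.cases ?_ (fun b => ?_) b <;>
      simp [hC, mul_rowOp_apply, transpose_rowOp_mul_apply, v, w, h]
  rw [hCe]
  apply emb_mem
  apply ih
  rw [← det_emb, ← hCe, hdet]

/-- Stable rank 1 makes the top left entry a unit after adding multiples of the lower rows to the
top row: the multipliers are `t` times the cofactors of the first column. -/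
lemma exists_unit_corner {n : ℕ}
    (hsr : ∀ a b : R, Ideal.span ({a, b} : Set R) = ⊤ → ∃ t : R, IsUnit (a + b * t))
    (A : Matrix (Fin (n + 1)) (Fin (n + 1)) R) (hA : A.det = 1) :
    ∃ w : Fin (n + 1) → R, w 0 = 0 ∧ IsUnit ((rowOp 0 w * A) 0 0) := by
  have hexp : A 0 0 * A.adjugate 0 0 + ∑ i : Fin n, A.adjugate 0 i.succ * A i.succ 0 = 1 := by
    have := congrFun (congrFun (adjugate_mul A) 0) 0
    rw [mul_apply, Fin.sum_univ_succ, hA] at this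
    simpa [mul_comm] using this
  obtain ⟨t, ht⟩ := hsr (A 0 0) (∑ i : Fin n, A.adjugate 0 i.succ * A i.succ 0) (by
    rw [Ideal.eq_top_iff_one, Ideal.mem_span_pair]
    exact ⟨A.adjugate 0 0, 1, by rw [one_mul, mul_comm]; exact hexp⟩)
  refine ⟨Fin.cons 0 fun i => t * A.adjugate 0 i.succ, rfl, ?_⟩
  rw [rowOp_mul_apply_same, Fin.sum_univ_succ]
  convert ht using 2
  simp [Finset.mul_sum, mul_comm, mul_left_comm]

lemma isGE_succ_succ {n : ℕ}
    (hsr : ∀ a b : R, Ideal.span ({a, b} : Set R) = ⊤ → ∃ t : R, IsUnit (a + b * t))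
    (ih : IsGE R (n + 1)) : IsGE R (n + 2) := by
  intro A hA
  obtain ⟨w, hw, hu⟩ := exists_unit_corner hsr A hA
  apply mem_of_rowOp_mul_mem hw
  have hdet : (rowOp 0 w * A).det = 1 := by rw [det_mul, det_rowOp _ _ hw, hA, one_mul]
  generalize rowOp 0 w * A = B at hu hdet
  obtain ⟨u, hu⟩ := hu
  -- Adding `u⁻¹ (1 - B 1 0)` times row 0 to row 1 puts a `1` below the corner `u`.
  let x : Fin (n + 2) → R := Pi.single 1 (↑u⁻¹ * (1 - B 1 0))
  have hx : x 0 = 0 := by simp [x]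
  apply mem_of_transpose_rowOp_mul_mem hx
  have hdetC : ((rowOp 0 x)ᵀ * B).det = 1 := by
    rw [det_mul, det_transpose, det_rowOp _ _ hx, hdet, one_mul]
  have h1 : ((rowOp 0 x)ᵀ * B) 1 0 = 1 := by
    rw [transpose_rowOp_mul_apply, ← hu]
    simp only [x, Pi.single_eq_same]
    linear_combination (1 - B 1 0) * u.inv_mul
  generalize (rowOp 0 x)ᵀ * B = C at h1 hdetC
  -- Adding `1 - C 0 0` times row 1 to row 0 turns the corner into `1`.
  let y : Fin (n + 2) → R := Pi.single 1 (1 - C 0 0)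
  have hy : y 0 = 0 := by simp [y]
  apply mem_of_rowOp_mul_mem hy
  apply mem_of_corner_eq_one ih
  · rw [det_mul, det_rowOp _ _ hy, hdetC, one_mul]
  · rw [rowOp_mul_apply_same, Finset.sum_eq_single 1]
    · simp [y, h1]
    · intro b _ hb
      simp [y, hb]
    · simp

lemma isGE_one : IsGE R 1 := by
  intro A hA
  convert one_mem (E 1 R)
  ext i j
  rw [Subsingleton.elim i 0, Subsingleton.elim j 0]
  simpa using hA

end StableRankOne

/-- A commutative ring of stable rank 1 is a generalized Euclidean ring. -/
theorem stmt_2 (R : Type*) [CommRing R]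
    (hsr : ∀ a b : R, Ideal.span ({a, b} : Set R) = ⊤ → ∃ t : R, IsUnit (a + b * t)) :
    IsGERing R := by
  have key : ∀ n, IsGE R (n + 1) := by
    intro n
    induction n with
    | zero => exact StableRankOne.isGE_one
    | succ n ih => exact StableRankOne.isGE_succ_succ hsr ih
  intro n hn
  obtain ⟨m, rfl⟩ := Nat.exists_eq_add_of_le' (show 1 ≤ n by omega)
  exact key m
end

section
/- Let R be a commutative ring with identity of stable rank at most 2, i.e., whenever a, b, c ∈ R satisfy aR + bR + cR = R there exist x, y ∈ R with (a + cx)R + (b + cy)R = R. Then R is a generalized Euclidean ring (SL_n(R) = E_n(R) for all n ≥ 2) if and only if R is a GE_2-ring (SL_2(R) = E_2(R)). -/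
open Matrix

section Reduction

variable {R : Type*} [CommRing R]

/-- `E_n(R)`, as the submonoid of matrices generated by the elementary ones. -/
abbrev elemGroup (n : ℕ) (R : Type*) [CommRing R] : Submonoid (Matrix (Fin n) (Fin n) R) :=
  Submonoid.closure (ElemMatrices n R)

lemma transvection_mem_elemGroup {n : ℕ} {i j : Fin n} (h : i ≠ j) (c : R) :
    transvection i j c ∈ elemGroup n R :=
  Submonoid.subset_closure ⟨i, j, c, h, rfl⟩

lemma exists_left_inv_mem_elemGroup {n : ℕ} {M : Matrix (Fin n) (Fin n) R}
    (hM : M ∈ elemGroup n R) : ∃ N ∈ elemGroup n R, N * M = 1 := by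
  induction hM using Submonoid.closure_induction with
  | mem M hM =>
    obtain ⟨i, j, c, h, rfl⟩ := hM
    exact ⟨_, transvection_mem_elemGroup h (-c), by
      rw [transvection_mul_transvection_same _ _ h]; simp⟩
  | one => exact ⟨1, one_mem _, by simp⟩
  | mul M M' _ _ h h' =>
    obtain ⟨N, hN, e⟩ := h
    obtain ⟨N', hN', e'⟩ := h'
    refine ⟨N' * N, mul_mem hN' hN, ?_⟩
    rw [Matrix.mul_assoc, ← Matrix.mul_assoc N, e, Matrix.one_mul, e']

lemma det_of_mem_elemGroup {n : ℕ} {M : Matrix (Fin n) (Fin n) R}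
    (hM : M ∈ elemGroup n R) : M.det = 1 := by
  induction hM using Submonoid.closure_induction with
  | mem M hM =>
    obtain ⟨i, j, c, h, rfl⟩ := hM
    exact det_transvection_of_ne i j h c
  | one => simp
  | mul M M' _ _ hleft hright => simp [hleft, hright]

/-- Adding to row `i` a combination of the other rows is a product of elementary operations. -/
lemma one_add_row_mem {n : ℕ} (i : Fin n) (u : Fin n → R) (hu : u i = 0) :
    1 + vecMulVec (Pi.single i 1) u ∈ elemGroup n R := by
  have key : ∀ s : Finset (Fin n), i ∉ s →
      1 + vecMulVec (Pi.single i 1) (∑ j ∈ s, Pi.single j (u j)) ∈ elemGroup n R := by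
    intro s
    induction s using Finset.induction_on with
    | empty => intro _; simp
    | insert a s ha ih =>
      intro hi
      rw [Finset.mem_insert, not_or] at hi
      have h1 := mul_mem (transvection_mem_elemGroup hi.1 (u a)) (ih hi.2)
      convert h1 using 1
      have hs : single i a (u a) = vecMulVec (Pi.single i 1) (Pi.single a (u a)) := by
        ext k l
        simp only [single_apply, vecMulVec_apply, Pi.single_apply]
        grind
      rw [Finset.sum_insert ha, vecMulVec_add, transvection, add_mul, Matrix.one_mul, mul_add,
        Matrix.mul_one, hs]
      have : (Pi.single a (u a) : Fin n → R) ⬝ᵥ Pi.single i 1 = 0 := by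
        simp [hi.1]
      rw [vecMulVec_mul_vecMulVec, this]
      simp
      abel
  have h := key (Finset.univ.erase i) (by simp)
  have e : ∑ j ∈ Finset.univ.erase i, Pi.single j (u j) = u := by
    have := Finset.univ_sum_single u
    rw [← Finset.add_sum_erase _ _ (Finset.mem_univ i), hu] at this
    simpa using this
  rwa [e] at h

lemma transpose_mem_elemGroup {n : ℕ} {M : Matrix (Fin n) (Fin n) R}
    (hM : M ∈ elemGroup n R) : Mᵀ ∈ elemGroup n R := by
  induction hM using Submonoid.closure_induction with
  | mem M hM =>
    obtain ⟨i, j, c, h, rfl⟩ := hM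
    have : (transvection i j c)ᵀ = transvection j i c := by simp [transvection]
    rw [this]
    exact transvection_mem_elemGroup h.symm c
  | one => simp
  | mul M M' _ _ hleft hright =>
    rw [transpose_mul]
    exact mul_mem hright hleft

/-- `w` is obtained from the column `v` by elementary row operations. -/
def Reach {n : ℕ} (v w : Fin n → R) : Prop := ∃ M ∈ elemGroup n R, M *ᵥ v = w

lemma Reach.trans {n : ℕ} {u v w : Fin n → R} (h : Reach u v) (h' : Reach v w) : Reach u w := by
  obtain ⟨M, hM, rfl⟩ := h
  obtain ⟨N, hN, rfl⟩ := h'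
  exact ⟨N * M, mul_mem hN hM, by simp⟩

lemma reach_row {n : ℕ} (v : Fin n → R) (i : Fin n) (u : Fin n → R) (hu : u i = 0) :
    Reach v (Function.update v i (v i + u ⬝ᵥ v)) := by
  refine ⟨_, one_add_row_mem i u hu, ?_⟩
  ext k
  rw [add_mulVec, one_mulVec, vecMulVec_mulVec]
  by_cases h : k = i
  · subst h; simp
  · simp [h]

/-- An entry equal to `1` clears the rest of the column. -/
lemma reach_single {n : ℕ} (v : Fin n → R) (i : Fin n) (hv : v i = 1) :
    Reach v (Pi.single i 1) := by
  have h := transpose_mem_elemGroup (one_add_row_mem i (Pi.single i 1 - v) (by simp [hv]))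
  refine ⟨_, h, ?_⟩
  rw [transpose_add, transpose_vecMulVec, transpose_one, add_mulVec, one_mulVec, vecMulVec_mulVec]
  ext k
  simp [hv]

lemma exists_mulVec_eq_single
    (hsr : ∀ a b c : R, Ideal.span ({a, b, c} : Set R) = ⊤ →
      ∃ x y : R, Ideal.span ({a + c * x, b + c * y} : Set R) = ⊤)
    {n : ℕ} (v w : Fin (n + 3) → R) (hvw : w ⬝ᵥ v = 1) : Reach v (Pi.single 0 1) := by
  set w' : Fin (n + 3) → R := Function.update (Function.update w 0 0) 1 0 with hw'
  have hw0 : w' 0 = 0 := by simp [hw']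
  have hw1 : w' 1 = 0 := by simp [hw']
  have hc : w 0 * v 0 + w 1 * v 1 + w' ⬝ᵥ v = 1 := by
    rw [← hvw]
    simp only [dotProduct, Fin.sum_univ_succ]
    have h2 : ∀ i : Fin (n + 1), w' i.succ.succ = w i.succ.succ := by
      intro i
      rw [hw', Function.update_of_ne, Function.update_of_ne]
      · exact Fin.succ_ne_zero _
      · intro h
        exact Fin.succ_ne_zero i (Fin.succ_injective _ h)
    simp only [← Fin.sum_univ_succ (n := n) fun i => w i.succ.succ * v i.succ.succ, h2]
    rw [Fin.succ_zero_eq_one, hw0, hw1]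
    ring
  obtain ⟨x, y, hxy⟩ := hsr (v 0) (v 1) (w' ⬝ᵥ v) (by
    rw [Ideal.eq_top_iff_one, Ideal.mem_span_insert]
    refine ⟨w 0, w 1 * v 1 + w' ⬝ᵥ v, ?_, by rw [← hc]; ring⟩
    rw [Ideal.mem_span_pair]
    exact ⟨w 1, 1, by ring⟩)
  rw [Ideal.eq_top_iff_one, Ideal.mem_span_pair] at hxy
  obtain ⟨s, t, hst⟩ := hxy
  have n01 : (0 : Fin (n + 3)) ≠ 1 := by simp
  have n02 : (0 : Fin (n + 3)) ≠ 2 := by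
    simp [Fin.ext_iff, Nat.mod_eq_of_lt (show 2 < n + 3 by omega)]
  have n12 : (1 : Fin (n + 3)) ≠ 2 := by
    simp [Fin.ext_iff, Nat.mod_eq_of_lt (show 2 < n + 3 by omega)]
  have r1 := reach_row v 0 (x • w') (by simp [hw0])
  set v1 := Function.update v 0 (v 0 + (x • w') ⬝ᵥ v) with hv1
  -- `w'` vanishes at `0`, so the value of `w' ⬝ᵥ v` survives the change of `v 0`
  have e1 : w' ⬝ᵥ v1 = w' ⬝ᵥ v := by
    refine Finset.sum_congr rfl fun i _ => ?_
    by_cases h : i = 0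
    · subst h; simp [hw0]
    · rw [hv1, Function.update_of_ne h]
  have r2 := reach_row v1 1 (y • w') (by simp [hw1])
  set v2 := Function.update v1 1 (v1 1 + (y • w') ⬝ᵥ v1) with hv2
  have a0 : v2 0 = v 0 + (w' ⬝ᵥ v) * x := by
    rw [hv2, Function.update_of_ne n01, hv1, Function.update_self, smul_dotProduct, smul_eq_mul,
      mul_comm]
  have a1 : v2 1 = v 1 + (w' ⬝ᵥ v) * y := by
    rw [hv2, Function.update_self, smul_dotProduct, e1, hv1, Function.update_of_ne n01.symm,
      smul_eq_mul, mul_comm y]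
  rw [← a0, ← a1] at hst
  have r3 := reach_row v2 2 (Pi.single 0 ((1 - v2 2) * s) + Pi.single 1 ((1 - v2 2) * t))
    (by simp [n02.symm, n12.symm])
  set v3 := Function.update v2 2 _ with hv3
  have a2 : v3 2 = 1 := by
    rw [hv3, Function.update_self, add_dotProduct, single_dotProduct, single_dotProduct]
    linear_combination (1 - v2 2) * hst
  have r4 := reach_row v3 0 (Pi.single 2 (1 - v3 0)) (by simp [n02])
  refine r1.trans (r2.trans (r3.trans (r4.trans (reach_single _ 0 ?_))))
  simp [a2]

/-- The block matrix `1 ⊕ B`. -/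
def oneBlock {n : ℕ} (B : Matrix (Fin n) (Fin n) R) : Matrix (Fin (n + 1)) (Fin (n + 1)) R :=
  Matrix.of fun i j => Fin.cases (Fin.cases 1 (fun _ => 0) j)
    (fun i' => Fin.cases 0 (fun j' => B i' j') j) i

section
variable {n : ℕ} (B : Matrix (Fin n) (Fin n) R)
@[simp] lemma oneBlock_zero_zero : oneBlock B 0 0 = 1 := rfl
@[simp] lemma oneBlock_zero_succ (j : Fin n) : oneBlock B 0 j.succ = 0 := rfl
@[simp] lemma oneBlock_succ_zero (i : Fin n) : oneBlock B i.succ 0 = 0 := rfl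
@[simp] lemma oneBlock_succ_succ (i j : Fin n) : oneBlock B i.succ j.succ = B i j := rfl
end

lemma oneBlock_mem {n : ℕ} {B : Matrix (Fin n) (Fin n) R} (hB : B ∈ elemGroup n R) :
    oneBlock B ∈ elemGroup (n + 1) R := by
  induction hB using Submonoid.closure_induction with
  | mem M hM =>
    obtain ⟨i, j, c, h, rfl⟩ := hM
    have : oneBlock (transvection i j c) = transvection i.succ j.succ c := by
      ext a b
      cases a using Fin.cases <;> cases b using Fin.cases <;>
        simp [transvection, Matrix.single_apply, Matrix.one_apply, Fin.succ_ne_zero,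
          (Fin.succ_ne_zero _).symm]
    rw [this]
    exact transvection_mem_elemGroup (by simpa using h) c
  | one =>
    have : oneBlock (1 : Matrix (Fin n) (Fin n) R) = 1 := by
      ext a b
      cases a using Fin.cases <;> cases b using Fin.cases <;>
        simp [Matrix.one_apply, (Fin.succ_ne_zero _).symm]
    rw [this]
    exact one_mem _
  | mul M M' _ _ h h' =>
    have : oneBlock (M * M') = oneBlock M * oneBlock M' := by
      ext a b
      cases a using Fin.cases <;> cases b using Fin.cases <;>
        simp [Matrix.mul_apply, Fin.sum_univ_succ]
    rw [this]
    exact mul_mem h h'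

lemma isGE_succ
    (hsr : ∀ a b c : R, Ideal.span ({a, b, c} : Set R) = ⊤ →
      ∃ x y : R, Ideal.span ({a + c * x, b + c * y} : Set R) = ⊤)
    {n : ℕ} (ih : IsGE R (n + 2)) : IsGE R (n + 3) := by
  intro A hA
  -- the first row of the adjugate witnesses unimodularity of the first column
  have huni : A.adjugate 0 ⬝ᵥ A.col 0 = 1 := by
    have := congrFun (congrFun (adjugate_mul A) 0) 0
    rw [hA, one_smul, one_apply_eq] at this
    exact this
  obtain ⟨M, hM, hMv⟩ := exists_mulVec_eq_single hsr _ _ huni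
  obtain ⟨N, hN, hNM⟩ := exists_left_inv_mem_elemGroup hM
  set C := M * A with hC
  have hC0 : ∀ i, C i 0 = (Pi.single 0 1 : Fin (n + 3) → R) i := fun i => by
    rw [← hMv]; rfl
  set u : Fin (n + 3) → R := Fin.cases 0 (fun j => C 0 j.succ) with hu
  have hP := one_add_row_mem 0 u rfl
  set B : Matrix (Fin (n + 2)) (Fin (n + 2)) R := C.submatrix Fin.succ Fin.succ with hB
  have hCB : C = oneBlock B * (1 + vecMulVec (Pi.single 0 1) u) := by
    rw [mul_add, Matrix.mul_one, mul_vecMulVec]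
    ext a b
    cases a using Fin.cases <;> cases b using Fin.cases <;>
      simp [vecMulVec_apply, hC0, hu, hB]
  have hdet : B.det = 1 := by
    have h1 : C.det = 1 := by rw [hC, det_mul, hA, det_of_mem_elemGroup hM, one_mul]
    rw [det_succ_column_zero, Fin.sum_univ_succ] at h1
    simpa [hC0, hB, Fin.succAbove_zero] using h1
  have hCmem : C ∈ elemGroup (n + 3) R := by
    rw [hCB]; exact mul_mem (oneBlock_mem (ih B hdet)) hP
  have : A = N * C := by rw [hC, ← Matrix.mul_assoc, hNM, Matrix.one_mul]
  rw [this]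
  exact mul_mem hN hCmem

end Reduction

/-- A commutative ring of stable rank at most 2 is a generalized Euclidean ring
if and only if it is a `GE_2`-ring. -/
theorem stmt_3 (R : Type*) [CommRing R]
    (hsr : ∀ a b c : R, Ideal.span ({a, b, c} : Set R) = ⊤ →
      ∃ x y : R, Ideal.span ({a + c * x, b + c * y} : Set R) = ⊤) :
    IsGERing R ↔ IsGE R 2 := by
  refine ⟨fun h => h 2 le_rfl, fun h n hn => ?_⟩
  obtain ⟨m, rfl⟩ := Nat.exists_eq_add_of_le' hn
  clear hn
  induction m with
  | zero => exact h
  | succ m ih => exact isGE_succ hsr ih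
end

section
/- Let R be a commutative ring with identity. Then R is a GE_2-ring, i.e., SL_2(R) = E_2(R), if and only if the group E_2(R) acts transitively (by right multiplication on row vectors) on the set Um_2(R) = {(r, s) ∈ R² : rR + sR = R} of unimodular pairs of R. -/
/-- Products of elementary matrices have determinant one. -/
lemma det_eq_one_of_mem_closure_elemMatrices {R : Type*} [CommRing R] {n : ℕ}
    {M : Matrix (Fin n) (Fin n) R} (hM : M ∈ Submonoid.closure (ElemMatrices n R)) :
    M.det = 1 := by
  induction hM using Submonoid.closure_induction with
  | mem x hx =>
    obtain ⟨i, j, c, hij, rfl⟩ := hx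
    exact Matrix.det_transvection_of_ne i j hij c
  | one => exact Matrix.det_one
  | mul x y _ _ hx hy => rw [Matrix.det_mul, hx, hy, one_mul]

/-- `R` is a `GE_2`-ring if and only if `E_2(R)` acts transitively (by right
multiplication on row vectors) on the set of unimodular pairs of `R`. -/
theorem stmt_4 (R : Type*) [CommRing R] :
    IsGE R 2 ↔
      ∀ r s r' s' : R, Ideal.span ({r, s} : Set R) = ⊤ →
        Ideal.span ({r', s'} : Set R) = ⊤ →
        ∃ M ∈ Submonoid.closure (ElemMatrices 2 R),
          Matrix.vecMul ![r, s] M = ![r', s'] := by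
  constructor
  · intro h r s r' s' hu hv
    obtain ⟨a, b, hab⟩ := Ideal.mem_span_pair.1 ((Ideal.eq_top_iff_one _).1 hu)
    obtain ⟨a', b', hab'⟩ := Ideal.mem_span_pair.1 ((Ideal.eq_top_iff_one _).1 hv)
    -- The left factor is the inverse of `!![r, s; -b, a]`, so it sends `(r, s)` to `(1, 0)`.
    refine ⟨!![a, -s; b, r] * !![r', s'; -b', a'], h _ ?_, ?_⟩
    · rw [Matrix.det_mul, Matrix.det_fin_two_of, Matrix.det_fin_two_of]
      linear_combination hab + (a * r + s * b) * hab'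
    · have h₁ : Matrix.vecMul ![r, s] !![a, -s; b, r] = ![1, 0] := by
        ext i
        fin_cases i
        · simp [Matrix.vecMul, dotProduct, Fin.sum_univ_two]
          linear_combination hab
        · simp [Matrix.vecMul, dotProduct, Fin.sum_univ_two]
          ring
      rw [← Matrix.vecMul_vecMul, h₁]
      ext i
      fin_cases i <;> simp [Matrix.vecMul, dotProduct, Fin.sum_univ_two]
  · intro h A hA
    have hA' := Matrix.det_fin_two A
    rw [hA] at hA'
    obtain ⟨M, hM, hMA⟩ := h 1 0 (A 0 0) (A 0 1)
      ((Ideal.eq_top_iff_one _).2 (Ideal.subset_span (by simp)))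
      ((Ideal.eq_top_iff_one _).2 (Ideal.mem_span_pair.2
        ⟨A 1 1, -A 1 0, by linear_combination -hA'⟩))
    have hdet := det_eq_one_of_mem_closure_elemMatrices hM
    rw [Matrix.det_fin_two] at hdet
    have h0 : M 0 0 = A 0 0 := by
      simpa [Matrix.vecMul, dotProduct, Fin.sum_univ_two] using congrFun hMA 0
    have h1 : M 0 1 = A 0 1 := by
      simpa [Matrix.vecMul, dotProduct, Fin.sum_univ_two] using congrFun hMA 1
    rw [h0, h1] at hdet
    -- The coefficient is the lower left entry of `A * M⁻¹`.
    have key : A = Matrix.transvection 1 0 (A 1 0 * M 1 1 - A 1 1 * M 1 0) * M := by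
      ext i j
      fin_cases i <;> fin_cases j <;>
        simp [Matrix.transvection, Matrix.mul_apply, Fin.sum_univ_two, Matrix.single_apply,
          h0, h1]
      · linear_combination -A 1 0 * hdet - M 1 0 * hA'
      · linear_combination -A 1 1 * hdet - M 1 1 * hA'
    rw [key]
    exact mul_mem (Submonoid.subset_closure ⟨1, 0, _, by simp, rfl⟩) hM
end

section
/- Let R be a commutative ring with identity and let J be an ideal of R contained in the Jacobson radical of R. Then R is a generalized Euclidean ring if and only if R/J is a generalized Euclidean ring. -/
open Matrix

section General

variable {R : Type*} [CommRing R] {n : ℕ}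

lemma transvection_mem_elem {i j : Fin n} (h : i ≠ j) (c : R) :
    transvection i j c ∈ Submonoid.closure (ElemMatrices n R) :=
  Submonoid.subset_closure ⟨i, j, c, h, rfl⟩

lemma det_eq_one_of_mem_elem {A : Matrix (Fin n) (Fin n) R}
    (hA : A ∈ Submonoid.closure (ElemMatrices n R)) : A.det = 1 := by
  induction hA using Submonoid.closure_induction with
  | mem x hx =>
    obtain ⟨i, j, c, h, rfl⟩ := hx
    exact det_transvection_of_ne i j h c
  | one => exact det_one
  | mul x y _ _ hx hy => rw [det_mul, hx, hy, one_mul]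

/-- The identity matrix with the vector `v` added to column `k`. For `v k = 0` this is the product
of the elementary matrices with entries `v i` in position `(i, k)`. -/
def columnMatrix (k : Fin n) (v : Fin n → R) : Matrix (Fin n) (Fin n) R :=
  1 + vecMulVec v (Pi.single k 1)

lemma columnMatrix_mul_apply (k : Fin n) (v : Fin n → R) (B : Matrix (Fin n) (Fin n) R)
    (i j : Fin n) : (columnMatrix k v * B) i j = B i j + v i * B k j := by
  simp [columnMatrix, add_mul, vecMulVec_mul, vecMulVec_apply]

lemma columnMatrix_mul (k : Fin n) (v w : Fin n → R) (hw : w k = 0) :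
    columnMatrix k v * columnMatrix k w = columnMatrix k (v + w) := by
  ext i j
  rw [columnMatrix_mul_apply]
  simp only [columnMatrix, Matrix.add_apply, vecMulVec_apply, hw, Pi.add_apply, one_apply,
    Pi.single_apply, eq_comm (a := k)]
  ring

lemma columnMatrix_mem_elem (k : Fin n) (v : Fin n → R) (hv : v k = 0) :
    columnMatrix k v ∈ Submonoid.closure (ElemMatrices n R) := by
  have key : ∀ s : Finset (Fin n), k ∉ s →
      columnMatrix k (∑ i ∈ s, Pi.single i (v i)) ∈ Submonoid.closure (ElemMatrices n R) := by
    intro s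
    induction s using Finset.induction_on with
    | empty =>
      intro _
      simp [columnMatrix, one_mem]
    | insert a s ha ih =>
      intro hk
      rw [Finset.mem_insert, not_or] at hk
      rw [Finset.sum_insert ha, ← columnMatrix_mul]
      · refine mul_mem ?_ (ih hk.2)
        have : columnMatrix k (Pi.single a (v a)) = transvection a k (v a) := by
          ext i j
          simp only [columnMatrix, transvection, vecMulVec_apply, single_apply, Pi.single_apply,
            Matrix.add_apply]
          grind
        rw [this]
        exact transvection_mem_elem (Ne.symm hk.1) _
      · rw [Finset.sum_apply]
        refine Finset.sum_eq_zero fun i hi => Pi.single_eq_of_ne ?_ _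
        rintro rfl
        exact hk.2 hi
  have h := key (Finset.univ.erase k) (Finset.notMem_erase _ _)
  have e : ∑ i ∈ Finset.univ.erase k, Pi.single i (v i) = v := by
    rw [Finset.sum_erase _ (by rw [hv, Pi.single_zero]), Finset.univ_sum_single]
  rwa [e] at h

/-- Whitehead's identity: `diag(u, u⁻¹)` in coordinates `i ≠ j` is a product of elementary
matrices. -/
lemma diagonal_pair_mem_elem {i j : Fin n} (h : i ≠ j) (u : Rˣ) :
    diagonal (fun a => ((Pi.mulSingle i u * Pi.mulSingle j u⁻¹ : Fin n → Rˣ) a : R)) ∈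
      Submonoid.closure (ElemMatrices n R) := by
  have e : diagonal (fun a => ((Pi.mulSingle i u * Pi.mulSingle j u⁻¹ : Fin n → Rˣ) a : R)) =
      (transvection i j (u : R) * transvection j i (-(↑u⁻¹ : R)) * transvection i j (u : R)) *
      (transvection i j (-1 : R) * transvection j i (1 : R) * transvection i j (-1 : R)) := by
    simp only [transvection, mul_add, add_mul, mul_one, one_mul, single_mul_single_same,
      single_mul_single_of_ne _ _ _ _ h, single_mul_single_of_ne _ _ _ _ h.symm, add_zero,
      mul_neg, neg_mul, Units.mul_inv, Units.inv_mul, neg_neg]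
    ext a b
    simp only [diagonal_apply, Matrix.add_apply, one_apply, single_apply, Pi.mul_apply,
      Pi.mulSingle_apply, Units.val_mul]
    by_cases hai : a = i <;> by_cases haj : a = j <;> by_cases hbi : b = i <;>
      by_cases hbj : b = j <;> subst_vars <;> simp_all [eq_comm]
  rw [e]
  exact mul_mem
    (mul_mem (mul_mem (transvection_mem_elem h _) (transvection_mem_elem h.symm _))
      (transvection_mem_elem h _))
    (mul_mem (mul_mem (transvection_mem_elem h _) (transvection_mem_elem h.symm _))
      (transvection_mem_elem h _))

lemma diagonal_mem_elem (j : Fin n) (d : Fin n → Rˣ) (hd : ∏ i, d i = 1) :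
    diagonal (fun a => (d a : R)) ∈ Submonoid.closure (ElemMatrices n R) := by
  -- The compensating factors `(d i)⁻¹` in coordinate `j` multiply to `1`.
  have e : d = ∏ i, (Pi.mulSingle i (d i) * Pi.mulSingle j (d i)⁻¹ : Fin n → Rˣ) := by
    rw [Finset.prod_mul_distrib, Finset.univ_prod_mulSingle]
    have : ∏ i, (Pi.mulSingle j (d i)⁻¹ : Fin n → Rˣ) = 1 := by
      have := map_prod (MonoidHom.mulSingle (fun _ : Fin n => Rˣ) j) (fun i => (d i)⁻¹)
        Finset.univ
      simp only [MonoidHom.mulSingle_apply] at this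
      rw [← this, Finset.prod_inv_distrib, hd, inv_one, Pi.mulSingle_one]
    rw [this, mul_one]
  rw [e]
  refine Finset.prod_induction _
    (fun f : Fin n → Rˣ => diagonal (fun a => (f a : R)) ∈ Submonoid.closure (ElemMatrices n R))
    (fun f g hf hg => ?_) ?_ fun i _ => ?_
  · have := mul_mem hf hg
    rw [diagonal_mul_diagonal] at this
    simpa only [Pi.mul_apply, Units.val_mul] using this
  · simp only [Pi.one_apply, Units.val_one, diagonal_one]
    exact one_mem _
  · by_cases h : i = j
    · subst h
      rw [← Pi.mulSingle_mul, mul_inv_cancel, Pi.mulSingle_one]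
      simp only [Pi.one_apply, Units.val_one, diagonal_one]
      exact one_mem _
    · exact diagonal_pair_mem_elem h _

end General

section Quotient

variable {R : Type*} [CommRing R] {J : Ideal R} {n : ℕ}

lemma isUnit_of_mk_eq_one (hJ : J ≤ (⊥ : Ideal R).jacobson) {a : R}
    (ha : Ideal.Quotient.mk J a = 1) : IsUnit a := by
  have h : a - 1 ∈ J := by
    rw [← Ideal.Quotient.eq_zero_iff_mem, map_sub, ha, map_one, sub_self]
  simpa using Ideal.mem_jacobson_bot.1 (hJ h) 1

/-- Gaussian elimination on a matrix congruent to `1`, by descending induction on the number of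
columns already cleared off the diagonal. -/
lemma mem_elem_of_cleared (hJ : J ≤ (⊥ : Ideal R).jacobson) (hn : 0 < n) (m k : ℕ)
    (hmk : k + m = n) (B : Matrix (Fin n) (Fin n) R) (hdet : B.det = 1)
    (hB : ∀ i j, Ideal.Quotient.mk J (B i j) = if i = j then 1 else 0)
    (hk : ∀ i j : Fin n, j.val < k → i ≠ j → B i j = 0) :
    B ∈ Submonoid.closure (ElemMatrices n R) := by
  have hunit : ∀ i, IsUnit (B i i) := fun i => isUnit_of_mk_eq_one hJ (by simp [hB])
  induction m generalizing k B with
  | zero =>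
    choose d hd using hunit
    have hBd : B = diagonal (fun a => (d a : R)) := by
      ext i j
      by_cases h : i = j
      · subst h
        simp [hd]
      · rw [hk i j (by have := j.isLt; omega) h, diagonal_apply_ne _ h]
    rw [hBd]
    refine diagonal_mem_elem ⟨0, hn⟩ d ?_
    rw [hBd, det_diagonal] at hdet
    ext
    simpa using hdet
  | succ m ih =>
    obtain ⟨u, hu⟩ := hunit ⟨k, by omega⟩
    set c : Fin n := ⟨k, by omega⟩ with hc
    -- Adding `v i` times row `c` to row `i` clears column `c` off the diagonal.
    let v : Fin n → R := fun i => if i = c then 0 else -(B i c * (↑u⁻¹ : R))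
    have hvc : v c = 0 := if_pos rfl
    have hvJ : ∀ i, Ideal.Quotient.mk J (v i) = 0 := by
      intro i
      by_cases h : i = c
      · simp [v, h]
      · simp [v, h, hB]
    have hinv : B = columnMatrix c (-v) * (columnMatrix c v * B) := by
      rw [← Matrix.mul_assoc, columnMatrix_mul c _ _ hvc]
      simp [columnMatrix]
    have hCB : ∀ i j, Ideal.Quotient.mk J ((columnMatrix c v * B) i j) =
        if i = j then 1 else 0 := by
      intro i j
      rw [columnMatrix_mul_apply, map_add, map_mul, hvJ, zero_mul, add_zero, hB]
    rw [hinv]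
    refine mul_mem (columnMatrix_mem_elem c _ (by simp [hvc]))
      (ih (k + 1) (by omega) _ ?_ hCB ?_
        fun i => isUnit_of_mk_eq_one hJ (by simp [hCB]))
    · rw [det_mul, hdet, det_eq_one_of_mem_elem (columnMatrix_mem_elem c v hvc), one_mul]
    · intro i j hj hij
      rw [columnMatrix_mul_apply]
      by_cases h : j = c
      · subst h
        simp [v, hij, mul_assoc, ← hu]
      · have hjk : j.val < k := by
          have : j.val ≠ k := fun h' => h (Fin.ext h')
          omega
        rw [hk i j hjk hij, hk c j hjk (Ne.symm h), mul_zero, add_zero]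

lemma mem_elem_of_congruent_one (hJ : J ≤ (⊥ : Ideal R).jacobson) (hn : 0 < n)
    (B : Matrix (Fin n) (Fin n) R) (hdet : B.det = 1)
    (hB : (Ideal.Quotient.mk J).mapMatrix B = 1) :
    B ∈ Submonoid.closure (ElemMatrices n R) := by
  refine mem_elem_of_cleared hJ hn n 0 (zero_add n) B hdet (fun i j => ?_)
    fun _ _ h => absurd h (Nat.not_lt_zero _)
  rw [← one_apply, ← hB]
  rfl

lemma mapMatrix_transvection {S : Type*} [CommRing S] (f : R →+* S) (i j : Fin n) (c : R) :
    f.mapMatrix (transvection i j c) = transvection i j (f c) := by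
  rw [transvection, map_add, map_one, transvection]
  congr 1
  simp

lemma exists_lift_of_mem_elem {A : Matrix (Fin n) (Fin n) (R ⧸ J)}
    (hA : A ∈ Submonoid.closure (ElemMatrices n (R ⧸ J))) :
    ∃ F G : Matrix (Fin n) (Fin n) R, F ∈ Submonoid.closure (ElemMatrices n R) ∧
      F * G = 1 ∧ (Ideal.Quotient.mk J).mapMatrix F = A := by
  induction hA using Submonoid.closure_induction with
  | mem x hx =>
    obtain ⟨i, j, c, h, rfl⟩ := hx
    obtain ⟨c, rfl⟩ := Ideal.Quotient.mk_surjective c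
    refine ⟨transvection i j c, transvection i j (-c), transvection_mem_elem h c, ?_,
      mapMatrix_transvection _ _ _ _⟩
    rw [transvection_mul_transvection_same _ _ h, add_neg_cancel, transvection_zero]
  | one => exact ⟨1, 1, one_mem _, mul_one 1, map_one _⟩
  | mul x y _ _ hx hy =>
    obtain ⟨F, G, hF, hFG, rfl⟩ := hx
    obtain ⟨F', G', hF', hFG', rfl⟩ := hy
    refine ⟨F * F', G' * G, mul_mem hF hF', ?_, map_mul _ _ _⟩
    rw [mul_assoc, ← mul_assoc F', hFG', one_mul, hFG]

lemma mapMatrix_mem_elem {S : Type*} [CommRing S] (f : R →+* S) {A : Matrix (Fin n) (Fin n) R}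
    (hA : A ∈ Submonoid.closure (ElemMatrices n R)) :
    f.mapMatrix A ∈ Submonoid.closure (ElemMatrices n S) := by
  induction hA using Submonoid.closure_induction with
  | mem x hx =>
    obtain ⟨i, j, c, h, rfl⟩ := hx
    rw [mapMatrix_transvection]
    exact transvection_mem_elem h _
  | one => rw [map_one]; exact one_mem _
  | mul x y _ _ hx hy => rw [map_mul]; exact mul_mem hx hy

/-- `SL_n(R) → SL_n(R/J)` is surjective for `n > 0`. -/
lemma exists_det_one_lift (hJ : J ≤ (⊥ : Ideal R).jacobson) (hn : 0 < n)
    (A : Matrix (Fin n) (Fin n) (R ⧸ J)) (hA : A.det = 1) :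
    ∃ B : Matrix (Fin n) (Fin n) R, B.det = 1 ∧ (Ideal.Quotient.mk J).mapMatrix B = A := by
  choose g hg using Ideal.Quotient.mk_surjective (I := J)
  have hmap : (Ideal.Quotient.mk J).mapMatrix (A.map g) = A := by
    ext i j
    simp [hg]
  have hdet : Ideal.Quotient.mk J (A.map g).det = 1 := by
    rw [RingHom.map_det, hmap, hA]
  obtain ⟨u, hu⟩ := isUnit_of_mk_eq_one hJ hdet
  have huinv : Ideal.Quotient.mk J (↑u⁻¹ : R) = 1 := by
    have h := congrArg (Ideal.Quotient.mk J) (Units.mul_inv u)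
    rwa [map_mul, hu, hdet, one_mul, map_one] at h
  refine ⟨(A.map g).updateRow ⟨0, hn⟩ ((↑u⁻¹ : R) • (A.map g) ⟨0, hn⟩), ?_, ?_⟩
  · rw [det_updateRow_smul, updateRow_eq_self, ← hu, Units.inv_mul]
  · ext i j
    by_cases h : i = ⟨0, hn⟩
    · subst h
      simp [huinv, hg]
    · simp [updateRow_ne h, hg]

end Quotient

/-- For an ideal `J` contained in the Jacobson radical of `R`, the ring `R` is a
generalized Euclidean ring if and only if `R/J` is. -/
theorem stmt_5 (R : Type*) [CommRing R] (J : Ideal R)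
    (hJ : J ≤ (⊥ : Ideal R).jacobson) :
    IsGERing R ↔ IsGERing (R ⧸ J) := by
  constructor
  · intro h n hn A hA
    obtain ⟨B, hB, rfl⟩ := exists_det_one_lift hJ (by omega) A hA
    exact mapMatrix_mem_elem _ (h n hn B hB)
  · intro h n hn A hA
    obtain ⟨F, G, hF, hFG, hmap⟩ := exists_lift_of_mem_elem
      (h n hn ((Ideal.Quotient.mk J).mapMatrix A) (by rw [← RingHom.map_det, hA, map_one]))
    have hA' : A = F * (G * A) := by rw [← Matrix.mul_assoc, hFG, Matrix.one_mul]
    rw [hA']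
    refine mul_mem hF (mem_elem_of_congruent_one hJ (by omega) _ ?_ ?_)
    · have hd := congrArg det hA'
      rwa [det_mul, det_eq_one_of_mem_elem hF, one_mul, hA, eq_comm] at hd
    · rw [map_mul, ← hmap, ← map_mul, mul_eq_one_comm.1 hFG, map_one]
end

section
/- Let R be a commutative ring with identity and let I be an ideal of R which is finite as a set. If the quotient ring R/I is a generalized Euclidean ring, then R is a generalized Euclidean ring. -/
open Matrix

namespace FiniteIdealGE

variable {R : Type*} [CommRing R]

/-- The monoid `E_n(R)` generated by the elementary matrices. -/
abbrev E (n : ℕ) (R : Type*) [CommRing R] : Submonoid (Matrix (Fin n) (Fin n) R) :=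
  Submonoid.closure (ElemMatrices n R)

lemma transvection_mem {n : ℕ} {i j : Fin n} (h : i ≠ j) (c : R) : transvection i j c ∈ E n R :=
  Submonoid.subset_closure ⟨i, j, c, h, rfl⟩

lemma det_of_mem {n : ℕ} {P : Matrix (Fin n) (Fin n) R} (hP : P ∈ E n R) : P.det = 1 := by
  induction hP using Submonoid.closure_induction with
  | mem x hx =>
    obtain ⟨i, j, c, h, rfl⟩ := hx
    exact det_transvection_of_ne i j h c
  | one => simp
  | mul x y _ _ hx hy => rw [det_mul, hx, hy, one_mul]

lemma exists_inv {n : ℕ} {P : Matrix (Fin n) (Fin n) R} (hP : P ∈ E n R) :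
    ∃ Q ∈ E n R, P * Q = 1 := by
  induction hP using Submonoid.closure_induction with
  | mem x hx =>
    obtain ⟨i, j, c, h, rfl⟩ := hx
    exact ⟨_, transvection_mem h (-c), by simp [transvection_mul_transvection_same, h]⟩
  | one => exact ⟨1, one_mem _, one_mul 1⟩
  | mul x y _ _ hx hy =>
    obtain ⟨p, hp, hp'⟩ := hx
    obtain ⟨q, hq, hq'⟩ := hy
    refine ⟨q * p, mul_mem hq hp, ?_⟩
    rw [mul_assoc, ← mul_assoc y, hq', one_mul, hp']

lemma mem_of_mul_mem {n : ℕ} {A P : Matrix (Fin n) (Fin n) R} (hP : P ∈ E n R)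
    (h : A * P ∈ E n R) : A ∈ E n R := by
  obtain ⟨Q, hQ, hPQ⟩ := exists_inv hP
  have := mul_mem h hQ
  rwa [mul_assoc, hPQ, mul_one] at this

lemma transpose_mem {n : ℕ} {P : Matrix (Fin n) (Fin n) R} (hP : P ∈ E n R) : Pᵀ ∈ E n R := by
  induction hP using Submonoid.closure_induction with
  | mem x hx =>
    obtain ⟨i, j, c, h, rfl⟩ := hx
    have : (transvection i j c)ᵀ = transvection j i c := by
      simp [transvection]
    rw [this]
    exact transvection_mem h.symm c
  | one => simp
  | mul x y _ _ hx hy =>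
    rw [transpose_mul]
    exact mul_mem hy hx

lemma exists_lift (I : Ideal R) {n : ℕ} {M : Matrix (Fin n) (Fin n) (R ⧸ I)}
    (hM : M ∈ E n (R ⧸ I)) : ∃ P ∈ E n R, (Ideal.Quotient.mk I).mapMatrix P = M := by
  induction hM using Submonoid.closure_induction with
  | mem x hx =>
    obtain ⟨i, j, c, h, rfl⟩ := hx
    obtain ⟨c, rfl⟩ := Ideal.Quotient.mk_surjective c
    refine ⟨_, transvection_mem h c, ?_⟩
    simp only [transvection, map_add, map_one]
    simp
  | one => exact ⟨1, one_mem _, map_one _⟩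
  | mul x y _ _ hx hy =>
    obtain ⟨p, hp, rfl⟩ := hx
    obtain ⟨q, hq, rfl⟩ := hy
    exact ⟨p * q, mul_mem hp hq, map_mul _ _ _⟩

/-! ### Block matrices -/

/-- The block matrix `1 ⊕ D`. -/
def emb {n : ℕ} (D : Matrix (Fin n) (Fin n) R) : Matrix (Fin (n + 1)) (Fin (n + 1)) R :=
  of (Fin.cons (Fin.cons 1 0) (fun i => Fin.cons 0 (D i)))

/-- The lower unitriangular matrix differing from `1` only by the entries `v` in its first
column, below the corner. -/
def lower {n : ℕ} (v : Fin n → R) : Matrix (Fin (n + 1)) (Fin (n + 1)) R :=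
  of (Fin.cons (Fin.cons 1 0) (fun i => Fin.cons (v i) ((1 : Matrix (Fin n) (Fin n) R) i)))

lemma emb_mul {n : ℕ} (C D : Matrix (Fin n) (Fin n) R) : emb (C * D) = emb C * emb D := by
  ext i j
  refine Fin.cases ?_ (fun i => ?_) i <;> refine Fin.cases ?_ (fun j => ?_) j <;>
    simp [emb, mul_apply, Fin.sum_univ_succ]

lemma emb_one {n : ℕ} : emb (1 : Matrix (Fin n) (Fin n) R) = 1 := by
  ext i j
  refine Fin.cases ?_ (fun i => ?_) i <;> refine Fin.cases ?_ (fun j => ?_) j <;>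
    simp [emb, one_apply, Fin.succ_ne_zero, (Fin.succ_ne_zero _).symm]

lemma emb_transvection {n : ℕ} (i j : Fin n) (c : R) :
    emb (transvection i j c) = transvection i.succ j.succ c := by
  ext k l
  refine Fin.cases ?_ (fun k => ?_) k <;> refine Fin.cases ?_ (fun l => ?_) l <;>
    simp [emb, transvection, one_apply, single_apply, Fin.succ_ne_zero, (Fin.succ_ne_zero _).symm]

lemma emb_mem {n : ℕ} {D : Matrix (Fin n) (Fin n) R} (hD : D ∈ E n R) : emb D ∈ E (n + 1) R := by
  induction hD using Submonoid.closure_induction with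
  | mem x hx =>
    obtain ⟨i, j, c, h, rfl⟩ := hx
    rw [emb_transvection]
    exact transvection_mem (by simpa using h) c
  | one => rw [emb_one]; exact one_mem _
  | mul x y _ _ hx hy => rw [emb_mul]; exact mul_mem hx hy

lemma det_emb {n : ℕ} (D : Matrix (Fin n) (Fin n) R) : (emb D).det = D.det := by
  rw [det_succ_row_zero, Fin.sum_univ_succ]
  have : (emb D).submatrix Fin.succ Fin.succ = D := by ext; simp [emb]
  simp [this]
  simp [emb]

lemma lower_add {n : ℕ} (v w : Fin n → R) : lower (v + w) = lower v * lower w := by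
  ext i j
  refine Fin.cases ?_ (fun i => ?_) i <;> refine Fin.cases ?_ (fun j => ?_) j <;>
    simp [lower, mul_apply, Fin.sum_univ_succ, one_apply]

lemma lower_single {n : ℕ} (i : Fin n) (c : R) :
    lower (Pi.single i c) = transvection i.succ 0 c := by
  ext k l
  refine Fin.cases ?_ (fun k => ?_) k <;> refine Fin.cases ?_ (fun l => ?_) l <;>
    simp [lower, transvection, one_apply, single_apply, Pi.single_apply, Fin.succ_ne_zero,
      (Fin.succ_ne_zero _).symm, eq_comm]

lemma lower_mem {n : ℕ} (v : Fin n → R) : lower v ∈ E (n + 1) R := by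
  induction v using Pi.single_induction with
  | zero =>
    have : lower (0 : Fin n → R) = 1 := emb_one
    rw [this]; exact one_mem _
  | add f g hf hg => rw [lower_add]; exact mul_mem hf hg
  | single i c => rw [lower_single]; exact transvection_mem (Fin.succ_ne_zero i) c

/-- Elimination of the first row and column by a corner entry `1`; the remaining block is the
Schur complement of the corner. -/
lemma eq_lower_emb_upper {n : ℕ} (A : Matrix (Fin (n + 1)) (Fin (n + 1)) R) (h : A 0 0 = 1) :
    A = lower (fun i => A i.succ 0) *
      emb (of fun i j : Fin n => A i.succ j.succ - A i.succ 0 * A 0 j.succ) *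
      (lower (fun j => A 0 j.succ))ᵀ := by
  ext i j
  refine Fin.cases ?_ (fun i => ?_) i <;> refine Fin.cases ?_ (fun j => ?_) j <;>
    simp [lower, emb, mul_apply, Fin.sum_univ_succ, one_apply, h]

/-! ### Units from finiteness -/

lemma exists_idem_pow (I : Ideal R) (hfin : (I : Set R).Finite) (a : R) (ha : a - 1 ∈ I) :
    ∃ N, 0 < N ∧ a ^ N * a ^ N = a ^ N := by
  have hmem : ∀ n : ℕ, a ^ n - 1 ∈ (I : Set R) := fun n => by
    have := sub_dvd_pow_sub_pow a 1 n
    rw [one_pow] at this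
    exact I.mem_of_dvd this ha
  obtain ⟨m, -, k, -, hmk, h⟩ := Set.infinite_univ.exists_ne_map_eq_of_mapsTo
    (f := fun n : ℕ => a ^ n - 1) (fun n _ => hmem n) hfin
  replace h : a ^ m = a ^ k := by simpa using h
  clear hmem
  wlog hlt : m < k generalizing m k
  · exact this k m hmk.symm h.symm (by omega)
  obtain ⟨p, hp, rfl⟩ : ∃ p, 0 < p ∧ k = m + p := ⟨k - m, by omega, by omega⟩
  have key : ∀ q, a ^ (m + p * q) = a ^ m := fun q => by
    induction q with
    | zero => simp
    | succ q ih => rw [mul_add, mul_one, ← add_assoc, pow_add, ih, ← pow_add, ← h]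
  -- a multiple of the period `p` which is at least the preperiod `m`
  obtain ⟨s, hs⟩ : ∃ s, p * (m + 1) = m + s :=
    ⟨p * (m + 1) - m, by have := Nat.le_mul_of_pos_left (m + 1) hp; omega⟩
  refine ⟨p * (m + 1), by positivity, ?_⟩
  calc a ^ (p * (m + 1)) * a ^ (p * (m + 1)) = a ^ (m + p * (m + 1)) * a ^ s := by
        rw [← pow_add, ← pow_add]; congr 1; omega
    _ = a ^ (p * (m + 1)) := by rw [key, ← pow_add, ← hs]

/-- The element `f` does not depend on `r`. It is the idempotent `1 - a ^ N`, so `a` is nilpotent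
on the `f`-part of `R` and invertible on the complementary part. -/
lemma exists_idem_unit (I : Ideal R) (hfin : (I : Set R).Finite) (a : R) (ha : a - 1 ∈ I) :
    ∃ f ∈ I, ∀ r, IsUnit (a + f * (1 - a * r)) := by
  obtain ⟨N, hN, hidem⟩ := exists_idem_pow I hfin a ha
  refine ⟨1 - a ^ N, ?_, fun r => ?_⟩
  · have := sub_dvd_pow_sub_pow a 1 N
    rw [one_pow] at this
    rw [← neg_sub]
    exact I.neg_mem (I.mem_of_dvd this ha)
  by_contra hu
  obtain ⟨m, hm, hmem⟩ := exists_max_ideal_of_mem_nonunits hu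
  have hp := hm.isPrime
  have hone : (1 : R) ∉ m := fun h => hm.ne_top ((Ideal.eq_top_iff_one m).2 h)
  have hz : a ^ N * (1 - a ^ N) ∈ m := by
    rw [mul_sub, hidem, mul_one, sub_self]; exact m.zero_mem
  -- In either case `a` lies in `m`, so that the element is congruent to `1` modulo `m`.
  have ham : a ∈ m := by
    rcases hp.mem_or_mem hz with h | h
    · exact hp.mem_of_pow_mem N h
    · have := m.sub_mem hmem (m.mul_mem_right (1 - a * r) h)
      simpa using this
  have haN : a ^ N ∈ m := m.pow_mem_of_mem ham N hN
  apply hone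
  have h1 : (1 : R) = (a + (1 - a ^ N) * (1 - a * r)) - a + a * r + a ^ N * (1 - a * r) := by ring
  rw [h1]
  exact m.add_mem (m.add_mem (m.sub_mem hmem ham) (m.mul_mem_right _ ham)) (m.mul_mem_right _ haN)

/-! ### Reduction of matrices congruent to the identity -/

/-- Congruence modulo `I` is only required outside the first column: adding a column to
the first one, as is done to obtain the corner `1`, destroys it there. -/
lemma mem_of_corner_one (I : Ideal R) {n : ℕ}
    (ih : ∀ D : Matrix (Fin n) (Fin n) R, D.det = 1 →
      (Ideal.Quotient.mk I).mapMatrix D = 1 → D ∈ E n R)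
    (A : Matrix (Fin (n + 1)) (Fin (n + 1)) R) (hdet : A.det = 1) (h0 : A 0 0 = 1)
    (hI : ∀ i (j : Fin n), Ideal.Quotient.mk I (A i j.succ) =
      (1 : Matrix (Fin (n + 1)) (Fin (n + 1)) (R ⧸ I)) i j.succ) : A ∈ E (n + 1) R := by
  have hA := eq_lower_emb_upper A h0
  rw [hA]
  refine mul_mem (mul_mem (lower_mem _) (emb_mem (ih _ ?_ ?_))) (transpose_mem (lower_mem _))
  · rw [hA, det_mul, det_mul, det_transpose, det_of_mem (lower_mem _), det_of_mem (lower_mem _),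
      det_emb, one_mul, mul_one] at hdet
    exact hdet
  · ext i j
    simp [hI, one_apply, (Fin.succ_ne_zero _).symm]

lemma mem_of_corner_unit (I : Ideal R) {n : ℕ}
    (ih : ∀ D : Matrix (Fin (n + 1)) (Fin (n + 1)) R, D.det = 1 →
      (Ideal.Quotient.mk I).mapMatrix D = 1 → D ∈ E (n + 1) R)
    (A : Matrix (Fin (n + 2)) (Fin (n + 2)) R) (hdet : A.det = 1) (h0 : IsUnit (A 0 0))
    (hI : (Ideal.Quotient.mk I).mapMatrix A = 1) : A ∈ E (n + 2) R := by
  have h01 : (0 : Fin (n + 2)) ≠ 1 := by simp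
  have hI' : ∀ i j, Ideal.Quotient.mk I (A i j) =
      (1 : Matrix (Fin (n + 2)) (Fin (n + 2)) (R ⧸ I)) i j := fun i j => by
    rw [← hI]; rfl
  obtain ⟨v, hv⟩ := h0.exists_right_inv
  -- With this `c` the entry at `(0, 1)` becomes `1 - A 0 0`.
  set c := v * (1 - A 0 0 - A 0 1) with hc
  have hcI : Ideal.Quotient.mk I c = 0 := by
    rw [hc]; simp [hI', one_apply]
  apply mem_of_mul_mem (transvection_mem h01 c)
  apply mem_of_mul_mem (transvection_mem h01.symm 1)
  apply mem_of_corner_one I ih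
  · rw [det_mul, det_mul, det_of_mem (transvection_mem h01 c),
      det_of_mem (transvection_mem h01.symm 1), hdet, one_mul, one_mul]
  · rw [mul_transvection_apply_same, mul_transvection_apply_of_ne _ _ _ _ h01,
      mul_transvection_apply_same, hc]
    linear_combination (1 - A 0 0 - A 0 1) * hv
  · intro i j
    rw [mul_transvection_apply_of_ne _ _ _ _ (Fin.succ_ne_zero j)]
    by_cases hj : j.succ = 1
    · rw [hj, mul_transvection_apply_same, map_add, map_mul, hcI, zero_mul, add_zero, hI']
    · rw [mul_transvection_apply_of_ne _ _ _ _ hj, hI']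

lemma mem_E_of_congr_one (I : Ideal R) (hfin : (I : Set R).Finite) (n : ℕ)
    (A : Matrix (Fin n) (Fin n) R) (hdet : A.det = 1)
    (hI : (Ideal.Quotient.mk I).mapMatrix A = 1) : A ∈ E n R := by
  match n with
  | 0 => rw [Subsingleton.elim A 1]; exact one_mem _
  | 1 =>
    have : A = 1 := by
      ext i j
      rw [Subsingleton.elim i 0, Subsingleton.elim j 0, one_apply_eq, ← hdet, det_fin_one]
    rw [this]; exact one_mem _
  | n + 2 =>
    have h00 : A 0 0 - 1 ∈ I := by
      rw [← Ideal.Quotient.eq_zero_iff_mem, map_sub, map_one, sub_eq_zero]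
      exact congrFun (congrFun hI 0) 0
    obtain ⟨f, hf, hunit⟩ := exists_idem_unit I hfin _ h00
    have hsum : ∑ j, A 0 j * A.adjugate j 0 = 1 := by
      rw [← mul_apply, mul_adjugate, hdet, one_smul, one_apply_eq]
    rw [Fin.sum_univ_succ] at hsum
    set L := lower (fun j : Fin (n + 1) => f * A.adjugate j.succ 0) with hL
    have hLE : L ∈ E (n + 2) R := lower_mem _
    have hLI : (Ideal.Quotient.mk I).mapMatrix L = 1 := by
      have hf' := Ideal.Quotient.eq_zero_iff_mem.2 hf
      ext i j
      refine Fin.cases ?_ (fun i => ?_) i <;> refine Fin.cases ?_ (fun j => ?_) j <;>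
        simp [hL, lower, one_apply, hf', apply_ite (Ideal.Quotient.mk I),
          (Fin.succ_ne_zero _).symm]
    apply mem_of_mul_mem hLE
    refine mem_of_corner_unit I (mem_E_of_congr_one I hfin (n + 1)) _ ?_ ?_ ?_
    · rw [det_mul, hdet, det_of_mem hLE, one_mul]
    · have h := hunit (A.adjugate 0 0)
      rw [← hsum, add_sub_cancel_left] at h
      convert h using 1
      rw [mul_apply, Fin.sum_univ_succ, Finset.mul_sum]
      simp [hL, lower]
      exact Finset.sum_congr rfl fun _ _ => by ring
    · rw [map_mul, hI, hLI, one_mul]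

end FiniteIdealGE

open FiniteIdealGE in
/-- If `I` is a finite ideal of `R` and `R/I` is a generalized Euclidean ring,
then so is `R`. -/
theorem stmt_6 (R : Type*) [CommRing R] (I : Ideal R)
    (hfin : (I : Set R).Finite) (hGE : IsGERing (R ⧸ I)) :
    IsGERing R := by
  intro n hn A hA
  have hdet : ((Ideal.Quotient.mk I).mapMatrix A).det = 1 := by
    rw [← RingHom.map_det, hA, map_one]
  obtain ⟨P, hP, hPA⟩ := exists_lift I (hGE n hn _ hdet)
  obtain ⟨Q, hQ, hPQ⟩ := exists_inv hP
  apply mem_of_mul_mem hQ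
  apply mem_E_of_congr_one I hfin
  · rw [det_mul, hA, det_of_mem hQ, one_mul]
  · rw [map_mul, ← hPA, ← map_mul, hPQ, map_one]
end

section
/- Let D be a finite set of positive integers with at least two elements, let e ∈ D with e ∈ {1, 2, 3, 4, 6}, and set η_e = ∏_{d ∈ D \ {e}} Φ_d(ζ_e) ∈ ℤ[ζ_e]. If η_e is a unit of ℤ[ζ_e] and O(D \ {e}) is a GE_2-ring, then O(D) is a GE_2-ring. -/
/-- The primitive `e`-th root of unity `ζ_e = e^{2πi/e}`. -/
noncomputable def zeta (e : ℕ) : ℂ := Complex.exp (2 * Real.pi * Complex.I / e)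

/-- The subring `ℤ[ζ_e]` of `ℂ`. -/
noncomputable def Zzeta (e : ℕ) : Subalgebra ℤ ℂ := Algebra.adjoin ℤ {zeta e}

/-- `ζ_e` as an element of `ℤ[ζ_e]`. -/
noncomputable def zetaEl (e : ℕ) : Zzeta e :=
  ⟨zeta e, Algebra.self_mem_adjoin_singleton ℤ _⟩

/-- `η_e = ∏_{d ∈ D \ {e}} Φ_d(ζ_e)` as an element of `ℤ[ζ_e]`. -/
noncomputable def eta (D : Finset ℕ) (e : ℕ) : Zzeta e :=
  ∏ d ∈ D.erase e, Polynomial.aeval (zetaEl e) (Polynomial.cyclotomic d ℤ)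

open Polynomial hiding eta

/-! ### Elementary matrices -/

theorem transvection_zero_one {R : Type*} [CommRing R] (c : R) :
    Matrix.transvection (0 : Fin 2) 1 c = !![1, c; 0, 1] := by
  ext i j
  fin_cases i <;> fin_cases j <;> simp [Matrix.transvection, Matrix.single]

theorem transvection_one_zero {R : Type*} [CommRing R] (c : R) :
    Matrix.transvection (1 : Fin 2) 0 c = !![1, 0; c, 1] := by
  ext i j
  fin_cases i <;> fin_cases j <;> simp [Matrix.transvection, Matrix.single]

theorem upper_mem {R : Type*} [CommRing R] (c : R) :
    !![1, c; 0, 1] ∈ Submonoid.closure (ElemMatrices 2 R) :=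
  Submonoid.subset_closure ⟨0, 1, c, by decide, (transvection_zero_one c).symm⟩

theorem lower_mem {R : Type*} [CommRing R] (c : R) :
    !![1, 0; c, 1] ∈ Submonoid.closure (ElemMatrices 2 R) :=
  Submonoid.subset_closure ⟨1, 0, c, by decide, (transvection_one_zero c).symm⟩

theorem antidiag_mem {R : Type*} [CommRing R] (u v : R) (h : u * v = 1) :
    !![0, u; -v, 0] ∈ Submonoid.closure (ElemMatrices 2 R) := by
  have := mul_mem (mul_mem (upper_mem u) (lower_mem (-v))) (upper_mem u)
  convert this using 1
  ext i j
  fin_cases i <;> fin_cases j <;> simp [Matrix.mul_apply, Fin.sum_univ_two] <;> grind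

theorem lowerTriangular_mem {R : Type*} [CommRing R] (u v c : R) (h : u * v = 1) :
    !![u, 0; c, v] ∈ Submonoid.closure (ElemMatrices 2 R) := by
  have := mul_mem (lower_mem (c * v))
    (mul_mem (antidiag_mem u v h) (antidiag_mem (-1 : R) (-1) (by ring)))
  convert this using 1
  ext i j
  fin_cases i <;> fin_cases j <;> simp [Matrix.mul_apply, Fin.sum_univ_two] <;> grind

/-- The Euclidean algorithm, run by column operations on the first row. -/
theorem isGE_of_euclidean {R : Type*} [CommRing R] (N : R → ℕ)
    (hN : ∀ a b : R, b ≠ 0 → ∃ q, N (a - q * b) < N b) : IsGE R 2 := by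
  suffices H : ∀ (n : ℕ) (a b c d : R), N b = n → a * d - b * c = 1 →
      !![a, b; c, d] ∈ Submonoid.closure (ElemMatrices 2 R) by
    intro A hA
    rw [Matrix.det_fin_two] at hA
    rw [Matrix.eta_fin_two A]
    exact H _ _ _ _ _ rfl hA
  intro n
  induction n using Nat.strong_induction_on with
  | _ n ih =>
    intro a b c d hn hdet
    by_cases hb : b = 0
    · subst hb
      exact lowerTriangular_mem a d c (by linear_combination hdet)
    · obtain ⟨q, hq⟩ := hN a b hb
      have h1 := ih _ (hn ▸ hq) (-b) (a - q * b) (-d) (c - q * d) rfl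
        (by linear_combination hdet)
      have := mul_mem (mul_mem h1 (antidiag_mem (-1 : R) (-1) (by ring))) (lower_mem q)
      convert this using 1
      ext i j
      fin_cases i <;> fin_cases j <;> simp [Matrix.mul_apply, Fin.sum_univ_two] <;> ring

/-! ### Products and isomorphisms -/

theorem IsGE.of_ringEquiv {R S : Type*} [CommRing R] [CommRing S] {n : ℕ} (f : R ≃+* S)
    (h : IsGE R n) : IsGE S n := by
  intro A hA
  have h1 := h (A.map f.symm) (by
    have := (RingHom.map_det f.symm.toRingHom A).symm
    simpa [hA] using this)
  have h2 : Submonoid.closure (ElemMatrices n R) ≤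
      (Submonoid.closure (ElemMatrices n S)).comap (f.toRingHom.mapMatrix : _ →+* _) := by
    rw [Submonoid.closure_le]
    rintro _ ⟨i, j, c, hij, rfl⟩
    refine Submonoid.subset_closure ⟨i, j, f c, hij, ?_⟩
    ext k l
    simp [Matrix.transvection, Matrix.single, Matrix.one_apply, apply_ite f]
  have h3 := h2 h1
  rw [Submonoid.mem_comap] at h3
  convert h3 using 1
  ext i j
  simp

/-- The matrix over `R × S` with prescribed components. -/
def pairMatrix {R S : Type*} {n : ℕ} (A : Matrix (Fin n) (Fin n) R)
    (B : Matrix (Fin n) (Fin n) S) : Matrix (Fin n) (Fin n) (R × S) :=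
  Matrix.of fun i j => (A i j, B i j)

theorem pairMatrix_mul {R S : Type*} [CommRing R] [CommRing S] {n : ℕ}
    (A A' : Matrix (Fin n) (Fin n) R) (B B' : Matrix (Fin n) (Fin n) S) :
    pairMatrix (A * A') (B * B') = pairMatrix A B * pairMatrix A' B' := by
  ext i j <;> simp [pairMatrix, Matrix.mul_apply, Prod.fst_sum, Prod.snd_sum]

theorem pairMatrix_one {R S : Type*} [CommRing R] [CommRing S] {n : ℕ} :
    pairMatrix (1 : Matrix (Fin n) (Fin n) R) (1 : Matrix (Fin n) (Fin n) S) = 1 := by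
  ext i j <;> by_cases h : i = j <;> simp [pairMatrix, Matrix.one_apply, h]

theorem IsGE.prod {R S : Type*} [CommRing R] [CommRing S] {n : ℕ}
    (hR : IsGE R n) (hS : IsGE S n) : IsGE (R × S) n := by
  have left : ∀ A ∈ Submonoid.closure (ElemMatrices n R),
      pairMatrix A (1 : Matrix (Fin n) (Fin n) S) ∈
        Submonoid.closure (ElemMatrices n (R × S)) := by
    intro A hA
    induction hA using Submonoid.closure_induction with
    | mem x hx =>
      obtain ⟨i, j, c, hij, rfl⟩ := hx
      refine Submonoid.subset_closure ⟨i, j, (c, 0), hij, ?_⟩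
      ext k l <;>
        simp [pairMatrix, Matrix.transvection, Matrix.single, Matrix.one_apply,
          apply_ite Prod.fst, apply_ite Prod.snd]
    | one => rw [pairMatrix_one]; exact one_mem _
    | mul x y _ _ hx hy =>
      have := mul_mem hx hy
      rwa [← pairMatrix_mul, one_mul] at this
  have right : ∀ B ∈ Submonoid.closure (ElemMatrices n S),
      pairMatrix (1 : Matrix (Fin n) (Fin n) R) B ∈
        Submonoid.closure (ElemMatrices n (R × S)) := by
    intro B hB
    induction hB using Submonoid.closure_induction with
    | mem x hx =>
      obtain ⟨i, j, c, hij, rfl⟩ := hx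
      refine Submonoid.subset_closure ⟨i, j, (0, c), hij, ?_⟩
      ext k l <;>
        simp [pairMatrix, Matrix.transvection, Matrix.single, Matrix.one_apply,
          apply_ite Prod.fst, apply_ite Prod.snd]
    | one => rw [pairMatrix_one]; exact one_mem _
    | mul x y _ _ hx hy =>
      have := mul_mem hx hy
      rwa [← pairMatrix_mul, one_mul] at this
  intro M hM
  have h1 := RingHom.map_det (RingHom.fst R S) M
  have h2 := RingHom.map_det (RingHom.snd R S) M
  rw [hM, map_one] at h1 h2
  have := mul_mem (left _ (hR _ h1.symm)) (right _ (hS _ h2.symm))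
  rw [← pairMatrix_mul, one_mul, mul_one] at this
  exact this

/-! ### The rings `ℤ[ζ_e]` for `e ∈ {1, 2, 3, 4, 6}` -/

/-- A ring embedded in `ℂ` with integral values of `|·|²` is `GE_2` as soon as every quotient of
two of its elements lies at distance less than `1` from some element of the ring. -/
theorem isGE_of_normSq {R : Type*} [CommRing R] (f : R →+* ℂ) (hf : Function.Injective f)
    (hint : ∀ r, ∃ n : ℤ, Complex.normSq (f r) = n)
    (hdiv : ∀ a b, b ≠ 0 → ∃ q, Complex.normSq (f a / f b - f q) < 1) : IsGE R 2 := by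
  choose n hn using hint
  have hn0 : ∀ r, 0 ≤ n r := fun r => by
    have := Complex.normSq_nonneg (f r)
    rw [hn] at this
    exact_mod_cast this
  refine isGE_of_euclidean (fun r => (n r).toNat) fun a b hb => ?_
  obtain ⟨q, hq⟩ := hdiv a b hb
  refine ⟨q, ?_⟩
  have hfb : f b ≠ 0 := (map_ne_zero_iff f hf).2 hb
  have hpos : 0 < Complex.normSq (f b) := Complex.normSq_pos.2 hfb
  have hlt : Complex.normSq (f (a - q * b)) < Complex.normSq (f b) := by
    have : f (a - q * b) = (f a / f b - f q) * f b := by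
      rw [map_sub, map_mul]; field_simp
    rw [this, Complex.normSq_mul]
    nlinarith
  rw [hn, hn] at hlt
  have hlt' : n (a - q * b) < n b := by exact_mod_cast hlt
  have := hn0 (a - q * b)
  show (n (a - q * b)).toNat < (n b).toNat
  omega

theorem isGE_of_int {R : Type*} [CommRing R] (f : R →+* ℂ) (hf : Function.Injective f)
    (h : ∀ r, ∃ n : ℤ, f r = n) : IsGE R 2 := by
  refine isGE_of_normSq f hf (fun r => ?_) fun a b _ => ?_
  · obtain ⟨n, hn⟩ := h r
    exact ⟨n * n, by rw [hn]; simp [Complex.normSq_apply]⟩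
  · obtain ⟨m, hm⟩ := h a
    obtain ⟨n, hn⟩ := h b
    refine ⟨(round ((m : ℝ) / n) : ℤ), ?_⟩
    have h1 := abs_sub_round ((m : ℝ) / n)
    have : f a / f b - f ((round ((m : ℝ) / n) : ℤ) : R) =
        (((m : ℝ) / n - round ((m : ℝ) / n) : ℝ) : ℂ) := by
      rw [hm, hn, map_intCast]; push_cast; rfl
    rw [this, Complex.normSq_ofReal]
    rw [abs_le] at h1
    nlinarith

/-- An imaginary quadratic order `ℤ[z]` with `z² = tz - 1`, `|t| ≤ 1`, is `GE_2`: its fundamental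
parallelogram has sides `1` and `z` with `|z| = 1`, so rounding first along `z` and then along `1`
leaves an error of squared modulus at most `1/4 + 1/4`. -/
theorem isGE_of_quadratic {R : Type*} [CommRing R] (f : R →+* ℂ) (hf : Function.Injective f)
    (t : ℤ) (ht : |t| ≤ 1) (x : R) (hz : (f x) ^ 2 = t * f x - 1)
    (h : ∀ r, ∃ a b : ℤ, f r = a + b * f x) : IsGE R 2 := by
  have ht' : (t : ℝ) ^ 2 ≤ 1 := by
    have : t ^ 2 ≤ 1 := by rw [abs_le] at ht; nlinarith [ht.1, ht.2]
    exact_mod_cast this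
  have hre : (f x).re ^ 2 - (f x).im ^ 2 = t * (f x).re - 1 := by
    have := congrArg Complex.re hz
    simp [pow_two] at this
    linarith
  have him : 2 * (f x).re * (f x).im = t * (f x).im := by
    have := congrArg Complex.im hz
    simp [pow_two] at this
    linarith
  have hy : (f x).im ≠ 0 := by
    intro h0
    rw [h0] at hre
    nlinarith [sq_nonneg ((f x).re * 2 - t)]
  have ht2 : 2 * (f x).re = t := mul_right_cancel₀ hy him
  have hone : (f x).re ^ 2 + (f x).im ^ 2 = 1 := by rw [← ht2] at hre; linarith
  refine isGE_of_normSq f hf (fun r => ?_) fun a b _ => ?_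
  · obtain ⟨a, b, hab⟩ := h r
    refine ⟨a ^ 2 + t * a * b + b ^ 2, ?_⟩
    rw [hab, Complex.normSq_apply]
    simp
    linear_combination (b : ℝ) ^ 2 * hone + a * b * ht2
  · set w := f a / f b
    set n := round (w.im / (f x).im)
    set m := round (w.re - n * (f x).re)
    refine ⟨(m : R) + n * x, ?_⟩
    have h1 := abs_sub_round (w.im / (f x).im)
    have h2 := abs_sub_round (w.re - n * (f x).re)
    have e1 : w.im - n * (f x).im = (w.im / (f x).im - n) * (f x).im := by field_simp
    have s1 : (w.im / (f x).im - n) ^ 2 ≤ 1 / 4 := by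
      rw [abs_le] at h1; nlinarith [h1.1, h1.2]
    have s2 : (w.re - n * (f x).re - m) ^ 2 ≤ 1 / 4 := by
      rw [abs_le] at h2; nlinarith [h2.1, h2.2]
    have s3 : (w.im - n * (f x).im) ^ 2 ≤ 1 / 4 := by
      rw [e1, mul_pow]
      nlinarith [sq_nonneg (f x).re, sq_nonneg (f x).im, sq_nonneg (w.im / (f x).im - n)]
    rw [Complex.normSq_apply]
    simp
    nlinarith

theorem zeta_isPrimitiveRoot {e : ℕ} (he : e ≠ 0) : IsPrimitiveRoot (zeta e) e :=
  Complex.isPrimitiveRoot_exp e he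

theorem aeval_zeta_eq_zero_iff {e : ℕ} (he : 0 < e) (p : ℤ[X]) :
    aeval (zeta e) p = 0 ↔ cyclotomic e ℤ ∣ p := by
  have hz := zeta_isPrimitiveRoot he.ne'
  rw [cyclotomic_eq_minpoly hz he, minpoly.isIntegrallyClosed_dvd_iff (hz.isIntegral he)]

/-- Either `ζ_e = ±1`, or `ζ_e` is a root of `z² - tz + 1` with `|t| ≤ 1`. -/
theorem zeta_cases {e : ℕ} (heS : e ∈ ({1, 2, 3, 4, 6} : Finset ℕ)) :
    (∃ m : ℤ, zeta e = m) ∨ ∃ t : ℤ, |t| ≤ 1 ∧ zeta e ^ 2 = t * zeta e - 1 := by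
  have he : e ≠ 0 := by rintro rfl; simp at heS
  have hz := zeta_isPrimitiveRoot he
  simp only [Finset.mem_insert, Finset.mem_singleton] at heS
  rcases heS with rfl | rfl | rfl | rfl | rfl
  · exact Or.inl ⟨1, by simpa using hz.pow_eq_one⟩
  · exact Or.inl ⟨-1, by simpa using hz.eq_neg_one_of_two_right⟩
  · refine Or.inr ⟨-1, by norm_num, ?_⟩
    have h1 : zeta 3 - 1 ≠ 0 := sub_ne_zero.2 (hz.ne_one (by norm_num))
    apply mul_left_cancel₀ h1
    push_cast
    linear_combination hz.pow_eq_one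
  · refine Or.inr ⟨0, by norm_num, ?_⟩
    have h2 := (hz.pow (by norm_num) (show 4 = 2 * 2 by norm_num)).eq_neg_one_of_two_right
    rw [h2]; simp
  · refine Or.inr ⟨1, by norm_num, ?_⟩
    have h2 := (hz.pow (by norm_num) (show 6 = 3 * 2 by norm_num)).eq_neg_one_of_two_right
    have h1 : zeta 6 + 1 ≠ 0 := by
      intro h
      refine hz.pow_ne_one_of_pos_of_lt (l := 2) (by norm_num) (by norm_num) ?_
      linear_combination (zeta 6 - 1) * h
    apply mul_left_cancel₀ h1
    push_cast
    linear_combination h2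

theorem isGE_cyclotomic {e : ℕ} (heS : e ∈ ({1, 2, 3, 4, 6} : Finset ℕ)) :
    IsGE (ℤ[X] ⧸ Ideal.span {cyclotomic e ℤ}) 2 := by
  have he : 0 < e := by rcases e with _ | e <;> simp at heS ⊢
  have hker : ∀ p ∈ Ideal.span {cyclotomic e ℤ}, (aeval (zeta e)).toRingHom p = 0 := fun p hp =>
    (aeval_zeta_eq_zero_iff he p).2 (Ideal.mem_span_singleton.1 hp)
  set f : ℤ[X] ⧸ Ideal.span {cyclotomic e ℤ} →+* ℂ := Ideal.Quotient.lift _ _ hker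
  have hmk : ∀ p, f (Ideal.Quotient.mk _ p) = aeval (zeta e) p := fun p =>
    Ideal.Quotient.lift_mk _ _ hker
  have hf : Function.Injective f := by
    rw [injective_iff_map_eq_zero]
    intro r hr
    obtain ⟨p, rfl⟩ := Ideal.Quotient.mk_surjective r
    rw [hmk, aeval_zeta_eq_zero_iff he] at hr
    exact Ideal.Quotient.eq_zero_iff_mem.2 (Ideal.mem_span_singleton.2 hr)
  rcases zeta_cases heS with ⟨m, hm⟩ | ⟨t, ht, hz⟩
  · refine isGE_of_int f hf fun r => ?_
    obtain ⟨p, rfl⟩ := Ideal.Quotient.mk_surjective r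
    refine ⟨p.eval m, ?_⟩
    rw [hmk, hm]
    simpa using aeval_algebraMap_apply ℂ m p
  · have hX : f (Ideal.Quotient.mk _ X) = zeta e := by rw [hmk, aeval_X]
    refine isGE_of_quadratic f hf t ht (Ideal.Quotient.mk _ X) (by rw [hX, hz]) fun r => ?_
    obtain ⟨p, rfl⟩ := Ideal.Quotient.mk_surjective r
    rw [hmk, hX]
    induction p using Polynomial.induction_on with
    | C a => exact ⟨a, 0, by simp⟩
    | add p q hp hq =>
      obtain ⟨a, b, h1⟩ := hp
      obtain ⟨c, d, h2⟩ := hq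
      exact ⟨a + c, b + d, by rw [map_add, h1, h2]; push_cast; ring⟩
    | monomial n c h =>
      obtain ⟨a, b, h1⟩ := h
      refine ⟨-b, a + b * t, ?_⟩
      rw [pow_succ, ← mul_assoc, map_mul, h1, aeval_X]
      push_cast
      linear_combination (b : ℂ) * hz

/-! ### Comaximality -/

theorem comaximal_of_isUnit_eta {D : Finset ℕ} {e : ℕ} (he : 0 < e) (heta : IsUnit (eta D e)) :
    IsCoprime (Ideal.span {cyclotomic e ℤ})
      (⨅ d ∈ D.erase e, Ideal.span {cyclotomic d ℤ}) := by
  obtain ⟨u, hu⟩ := heta.exists_right_inv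
  have hmem : (u : ℂ) ∈ Algebra.adjoin ℤ {zeta e} := u.2
  rw [Algebra.adjoin_singleton_eq_range_aeval] at hmem
  obtain ⟨p, hp⟩ := hmem
  have hp' : aeval (zeta e) p = (u : ℂ) := hp
  have hP : ((eta D e : Zzeta e) : ℂ) = aeval (zeta e) (∏ d ∈ D.erase e, cyclotomic d ℤ) := by
    have h1 : eta D e = aeval (zetaEl e) (∏ d ∈ D.erase e, cyclotomic d ℤ) := by
      rw [map_prod]; rfl
    rw [h1]
    exact (aeval_algHom_apply (Zzeta e).val (zetaEl e) _).symm
  have hroot : aeval (zeta e) (1 - (∏ d ∈ D.erase e, cyclotomic d ℤ) * p) = 0 := by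
    have h2 : ((eta D e : Zzeta e) : ℂ) * u = 1 := by exact_mod_cast congrArg Subtype.val hu
    rw [map_sub, map_mul, map_one, hp', ← hP, h2, sub_self]
  rw [aeval_zeta_eq_zero_iff he] at hroot
  rw [Ideal.isCoprime_iff_exists]
  refine ⟨_, Ideal.mem_span_singleton.2 hroot, (∏ d ∈ D.erase e, cyclotomic d ℤ) * p, ?_, by ring⟩
  simp only [Ideal.mem_iInf, Ideal.mem_span_singleton]
  intro d hd
  exact Dvd.dvd.mul_right (Finset.dvd_prod_of_mem _ hd) _

/-- If `e ∈ D ∩ {1,2,3,4,6}`, `η_e` is a unit of `ℤ[ζ_e]`, and `O(D \ {e})` is a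
`GE_2`-ring, then `O(D)` is a `GE_2`-ring. -/
theorem stmt_9 (D : Finset ℕ) (hpos : ∀ d ∈ D, 0 < d) (hcard : 2 ≤ D.card)
    (e : ℕ) (he : e ∈ D) (heS : e ∈ ({1, 2, 3, 4, 6} : Finset ℕ))
    (heta : IsUnit (eta D e))
    (hGE : IsGE (Polynomial ℤ ⧸
      (⨅ d ∈ D.erase e, Ideal.span {Polynomial.cyclotomic d ℤ})) 2) :
    IsGE (Polynomial ℤ ⧸ (⨅ d ∈ D, Ideal.span {Polynomial.cyclotomic d ℤ})) 2 := by
  have hinf : (⨅ d ∈ D, Ideal.span {cyclotomic d ℤ}) =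
      Ideal.span {cyclotomic e ℤ} ⊓ ⨅ d ∈ D.erase e, Ideal.span {cyclotomic d ℤ} := by
    conv_lhs => rw [← Finset.insert_erase he]
    rw [Finset.iInf_insert]
  rw [hinf]
  exact ((isGE_cyclotomic heS).prod hGE).of_ringEquiv
    (Ideal.quotientInfEquivQuotientProd _ _ (comaximal_of_isUnit_eta (hpos e he) heta)).symm
end

section
/- Let D be a finite set of positive integers with at least two elements, let e ∈ D with e ∈ {1, 2, 3, 6}, and set η_e = ∏_{d ∈ D \ {e}} Φ_d(ζ_e) ∈ ℤ[ζ_e]. If the principal ideal η_e ℤ[ζ_e] equals 2 ℤ[ζ_e] and O(D \ {e}) is a GE_2-ring, then O(D) is a GE_2-ring. -/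
open Matrix Polynomial

namespace GE2Gluing

/-! ### Elementary matrices in `SL₂` -/

section Elementary

variable {R S : Type*} [CommRing R] [CommRing S]

/-- The upper elementary matrix with corner entry `a`, in `SL₂(R)`. -/
def x12 (a : R) : SpecialLinearGroup (Fin 2) R := ⟨!![1, a; 0, 1], by simp⟩

/-- The lower elementary matrix with corner entry `a`, in `SL₂(R)`. -/
def x21 (a : R) : SpecialLinearGroup (Fin 2) R := ⟨!![1, 0; a, 1], by simp⟩

/-- The diagonal matrix `diag(u, u⁻¹)`. -/
def diagU (u : Rˣ) : SpecialLinearGroup (Fin 2) R :=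
  ⟨!![(u : R), 0; 0, ((u⁻¹ : Rˣ) : R)], by simp⟩

/-- The Weyl element. -/
def weyl : SpecialLinearGroup (Fin 2) R := ⟨!![0, 1; -1, 0], by simp⟩

@[simp] lemma x12_coe (a : R) : (x12 a : Matrix (Fin 2) (Fin 2) R) = !![1, a; 0, 1] := rfl
@[simp] lemma x21_coe (a : R) : (x21 a : Matrix (Fin 2) (Fin 2) R) = !![1, 0; a, 1] := rfl
@[simp] lemma diagU_coe (u : Rˣ) :
    (diagU u : Matrix (Fin 2) (Fin 2) R) = !![(u : R), 0; 0, ((u⁻¹ : Rˣ) : R)] := rfl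
@[simp] lemma weyl_coe : ((weyl : SpecialLinearGroup (Fin 2) R) : Matrix (Fin 2) (Fin 2) R) =
    !![0, 1; -1, 0] := rfl

variable (R) in
/-- `E₂(R)`, as a subgroup of `SL₂(R)`. -/
def E2 : Subgroup (SpecialLinearGroup (Fin 2) R) :=
  Subgroup.closure (Set.range x12 ∪ Set.range x21)

lemma x12_mem (a : R) : x12 a ∈ E2 R := Subgroup.subset_closure (Or.inl ⟨a, rfl⟩)
lemma x21_mem (a : R) : x21 a ∈ E2 R := Subgroup.subset_closure (Or.inr ⟨a, rfl⟩)

lemma x12_add (a b : R) : x12 (a + b) = x12 a * x12 b := by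
  ext i j; fin_cases i <;> fin_cases j <;> simp [Matrix.mul_apply, add_comm]

lemma x21_add (a b : R) : x21 (a + b) = x21 a * x21 b := by
  ext i j; fin_cases i <;> fin_cases j <;> simp [Matrix.mul_apply]

lemma x12_zero : x12 (0 : R) = 1 := by
  ext i j; fin_cases i <;> fin_cases j <;> simp

lemma x21_zero : x21 (0 : R) = 1 := by
  ext i j; fin_cases i <;> fin_cases j <;> simp

lemma x12_neg (a : R) : x12 (-a) = (x12 a)⁻¹ := by
  rw [eq_inv_iff_mul_eq_one, ← x12_add, neg_add_cancel, x12_zero]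

lemma x21_neg (a : R) : x21 (-a) = (x21 a)⁻¹ := by
  rw [eq_inv_iff_mul_eq_one, ← x21_add, neg_add_cancel, x21_zero]

lemma x21_eq (a : R) : x21 a = weyl * (weyl * (weyl * (x12 (-a) * weyl))) := by
  ext i j; fin_cases i <;> fin_cases j <;> simp [Matrix.mul_apply]

lemma map_x12 (f : R →+* S) (a : R) : SpecialLinearGroup.map f (x12 a) = x12 (f a) := by
  ext i j; fin_cases i <;> fin_cases j <;> simp

lemma map_x21 (f : R →+* S) (a : R) : SpecialLinearGroup.map f (x21 a) = x21 (f a) := by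
  ext i j; fin_cases i <;> fin_cases j <;> simp

lemma isGE_iff : IsGE R 2 ↔ E2 R = ⊤ := by
  constructor
  · intro h
    rw [eq_top_iff]
    rintro A -
    have key : ∀ M ∈ Submonoid.closure (ElemMatrices 2 R), ∃ B ∈ E2 R, B.1 = M := by
      intro M hM
      induction hM using Submonoid.closure_induction with
      | mem M hM =>
        obtain ⟨i, j, c, hij, rfl⟩ := hM
        fin_cases i <;> fin_cases j
        · exact absurd rfl hij
        · refine ⟨x12 c, x12_mem c, ?_⟩
          ext i j; fin_cases i <;> fin_cases j <;> simp [Matrix.transvection]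
        · refine ⟨x21 c, x21_mem c, ?_⟩
          ext i j; fin_cases i <;> fin_cases j <;> simp [Matrix.transvection]
        · exact absurd rfl hij
      | one => exact ⟨1, one_mem _, rfl⟩
      | mul M M' _ _ h h' =>
        obtain ⟨B, hB, rfl⟩ := h
        obtain ⟨B', hB', rfl⟩ := h'
        exact ⟨B * B', mul_mem hB hB', rfl⟩
    obtain ⟨B, hB, hBA⟩ := key A.1 (h A.1 A.2)
    rwa [← Subtype.ext hBA]
  · intro h A hA
    have m12 : ∀ a : R, (x12 a).1 ∈ Submonoid.closure (ElemMatrices 2 R) := fun a =>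
      Submonoid.subset_closure ⟨0, 1, a, by decide, by
        ext i j; fin_cases i <;> fin_cases j <;> simp [Matrix.transvection]⟩
    have m21 : ∀ a : R, (x21 a).1 ∈ Submonoid.closure (ElemMatrices 2 R) := fun a =>
      Submonoid.subset_closure ⟨1, 0, a, by decide, by
        ext i j; fin_cases i <;> fin_cases j <;> simp [Matrix.transvection]⟩
    have key : ∀ B ∈ E2 R, B.1 ∈ Submonoid.closure (ElemMatrices 2 R) := by
      intro B hB
      induction hB using Subgroup.closure_induction'' with
      | mem x hx =>
        rcases hx with ⟨a, rfl⟩ | ⟨a, rfl⟩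
        · exact m12 a
        · exact m21 a
      | inv_mem x hx =>
        rcases hx with ⟨a, rfl⟩ | ⟨a, rfl⟩
        · rw [← x12_neg]; exact m12 _
        · rw [← x21_neg]; exact m21 _
      | one => exact one_mem _
      | mul x y _ _ hx hy => exact mul_mem hx hy
    exact key ⟨A, hA⟩ (h ▸ Subgroup.mem_top _)

lemma map_E2 (f : R →+* S) (hf : Function.Surjective f) :
    (E2 R).map (SpecialLinearGroup.map f) = E2 S := by
  rw [E2, E2, MonoidHom.map_closure, Set.image_union, ← Set.range_comp, ← Set.range_comp]
  have h1 : ⇑(SpecialLinearGroup.map (n := Fin 2) f) ∘ x12 = x12 ∘ f := funext (map_x12 f)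
  have h2 : ⇑(SpecialLinearGroup.map (n := Fin 2) f) ∘ x21 = x21 ∘ f := funext (map_x21 f)
  rw [h1, h2, hf.range_comp, hf.range_comp]

end Elementary

/-! ### Normal subgroups of level two -/

section Bruhat

variable {L : Type*} [CommRing L]

lemma weyl_x12_weyl (v : Lˣ) :
    weyl * (x12 (v : L) * weyl) =
      diagU (-v⁻¹) * (x12 (-(v : L)) * (weyl * x12 (-((v⁻¹ : Lˣ) : L)))) := by
  ext i j; fin_cases i <;> fin_cases j <;> simp [Matrix.mul_apply]

lemma weyl_weyl : weyl * weyl = diagU (-1 : Lˣ) := by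
  ext i j; fin_cases i <;> fin_cases j <;> simp [Matrix.mul_apply]

lemma diagU_mul (u v : Lˣ) : diagU (u * v) = diagU u * diagU v := by
  ext i j; fin_cases i <;> fin_cases j <;> simp [Matrix.mul_apply, mul_comm]

lemma diagU_one : diagU (1 : Lˣ) = 1 := by
  ext i j; fin_cases i <;> fin_cases j <;> simp

lemma x12_diagU (a : L) (u : Lˣ) :
    x12 a * diagU u = diagU u * x12 (a * ((u⁻¹ : Lˣ) : L) * ((u⁻¹ : Lˣ) : L)) := by
  ext i j; fin_cases i <;> fin_cases j <;> simp [Matrix.mul_apply]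
  linear_combination (-(((u⁻¹ : Lˣ) : L) * a)) * u.inv_mul

/-- `diag(u, u⁻¹)` as a word whose letters depend only on `u` and `u⁻¹`. -/
lemma diagU_eq (u : Lˣ) :
    diagU u = weyl * x12 ((u⁻¹ : Lˣ) : L) * weyl * x12 (u : L) * weyl *
      x12 ((u⁻¹ : Lˣ) : L) := by
  ext i j; fin_cases i <;> fin_cases j <;> simp [Matrix.mul_apply]

/-- If `SL₂(L) = E₂(L)` and every element of `L` is `0` or a unit modulo `2`, then a normal
subgroup of `SL₂(L)` inside the level-two congruence subgroup that contains the upper elementary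
matrices of level two is the whole congruence subgroup. Modulo `N` the letter `x12 b` depends only
on `b` modulo `2`, so every element can be brought to a Bruhat normal form. -/
lemma level_two_le (hL : E2 L = ⊤) (hmod : ∀ a : L, ∃ c, a = 2 * c ∨ ∃ u : Lˣ, a = u + 2 * c)
    (N : Subgroup (SpecialLinearGroup (Fin 2) L)) [N.Normal]
    (hN : ∀ c : L, x12 (2 * c) ∈ N)
    (hker : N ≤ (SpecialLinearGroup.map (Ideal.Quotient.mk (Ideal.span {(2 : L)}))).ker) :
    (SpecialLinearGroup.map (n := Fin 2) (Ideal.Quotient.mk (Ideal.span {(2 : L)}))).ker ≤ N := by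
  let π := QuotientGroup.mk' N
  have hπ : ∀ {g}, π g = 1 ↔ g ∈ N := fun {g} => QuotientGroup.eq_one_iff g
  have hx : ∀ a c : L, π (x12 (a + 2 * c)) = π (x12 a) := fun a c => by
    rw [x12_add, map_mul, hπ.2 (hN c), mul_one]
  let P : SpecialLinearGroup (Fin 2) L → Prop := fun g =>
    (∃ (u : Lˣ) (a : L), π g = π (diagU u * x12 a)) ∨
    (∃ (u : Lˣ) (a b : L), π g = π (diagU u * (x12 a * (weyl * x12 b))))
  have P12 : ∀ g c, P g → P (g * x12 c) := by
    rintro g c (⟨u, a, h⟩ | ⟨u, a, b, h⟩)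
    · exact Or.inl ⟨u, a + c, by rw [map_mul, h, ← map_mul, x12_add, mul_assoc]⟩
    · exact Or.inr ⟨u, a, b + c, by rw [map_mul, h, ← map_mul, x12_add]; simp only [mul_assoc]⟩
  have Pw : ∀ g, P g → P (g * weyl) := by
    rintro g (⟨u, a, h⟩ | ⟨u, a, b, h⟩)
    · exact Or.inr ⟨u, a, 0, by rw [map_mul, h, ← map_mul, x12_zero, mul_one, mul_assoc]⟩
    · obtain ⟨c, rfl | ⟨v, rfl⟩⟩ := hmod b
      · left
        refine ⟨u * (-1), a * (((-1 : Lˣ)⁻¹ : Lˣ) : L) * (((-1 : Lˣ)⁻¹ : Lˣ) : L), ?_⟩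
        rw [map_mul, h, diagU_mul, mul_assoc, ← x12_diagU, ← weyl_weyl]
        simp only [map_mul, hπ.2 (hN c), mul_one, mul_assoc]
      · right
        refine ⟨u * (-v⁻¹), a * (((-v⁻¹ : Lˣ)⁻¹ : Lˣ) : L) * (((-v⁻¹ : Lˣ)⁻¹ : Lˣ) : L) + -(v : L),
          -((v⁻¹ : Lˣ) : L), ?_⟩
        have h1 : π (g * weyl) = π (diagU u * (x12 a * (weyl * (x12 (v : L) * weyl)))) := by
          rw [map_mul, h]
          simp only [map_mul, hx, mul_assoc]
        rw [h1, weyl_x12_weyl, x12_add, diagU_mul]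
        congr 1
        have := x12_diagU a (-v⁻¹)
        rw [← mul_assoc (x12 a), this]
        simp only [mul_assoc]
  have P21 : ∀ g c, P g → P (g * x21 c) := by
    intro g c hg
    rw [x21_eq]
    simp only [← mul_assoc]
    exact Pw _ (P12 _ _ (Pw _ (Pw _ (Pw _ hg))))
  have hP : ∀ g, P g := by
    intro g
    have hg : g ∈ E2 L := hL ▸ Subgroup.mem_top g
    induction hg using Subgroup.closure_induction_right with
    | one => exact Or.inl ⟨1, 0, by rw [diagU_one, x12_zero, one_mul]⟩
    | mul_right x _ y hy hx =>
      rcases hy with ⟨a, rfl⟩ | ⟨a, rfl⟩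
      · exact P12 _ _ hx
      · exact P21 _ _ hx
    | mul_inv_cancel x _ y hy hx =>
      rcases hy with ⟨a, rfl⟩ | ⟨a, rfl⟩
      · rw [← x12_neg]; exact P12 _ _ hx
      · rw [← x21_neg]; exact P21 _ _ hx
  -- A unit congruent to `1` modulo `2` gives a diagonal matrix in `N`.
  have hD : ∀ u : Lˣ, (∃ c, (u : L) = 1 + 2 * c) → diagU u ∈ N := by
    rintro u ⟨c, hc⟩
    have h1 : (u : L) = ((1 : Lˣ) : L) + 2 * c := by rw [hc, Units.val_one]
    have h2 : ((u⁻¹ : Lˣ) : L) = (((1 : Lˣ)⁻¹ : Lˣ) : L) + 2 * (-(((u⁻¹ : Lˣ) : L) * c)) := by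
      have := u.inv_mul
      rw [hc] at this
      rw [inv_one, Units.val_one]
      linear_combination this
    rw [← hπ]
    have h3 : π (diagU u) = π (diagU 1) := by
      rw [diagU_eq u, diagU_eq 1, h1, h2]
      simp only [map_mul, hx]
    rw [h3, diagU_one, map_one]
  have hmk : ∀ x : L, Ideal.Quotient.mk (Ideal.span {(2 : L)}) x = 0 ↔ ∃ c, x = 2 * c := by
    intro x
    rw [Ideal.Quotient.eq_zero_iff_mem, Ideal.mem_span_singleton, dvd_def]
  intro g hg
  have red : ∀ g', π g = π g' →
      SpecialLinearGroup.map (Ideal.Quotient.mk (Ideal.span {(2 : L)})) g' = 1 := by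
    intro g' h
    have h' : g⁻¹ * g' ∈ N := QuotientGroup.eq.1 h
    have h'' := hker h'
    have := mul_mem hg h''
    simpa using this
  have ent : ∀ g', π g = π g' → ∀ i j, Ideal.Quotient.mk (Ideal.span {(2 : L)}) (g'.1 i j) =
      (1 : Matrix (Fin 2) (Fin 2) (L ⧸ Ideal.span {(2 : L)})) i j := by
    intro g' h i j
    have := congrArg (fun M => M.1 i j) (red g' h)
    simpa using this
  rcases hP g with ⟨u, a, h⟩ | ⟨u, a, b, h⟩
  · have e00 := ent _ h 0 0
    have e01 := ent _ h 0 1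
    simp [Matrix.mul_apply] at e00 e01
    rw [← hπ, h, hπ]
    refine mul_mem (hD u ?_) ?_
    · rw [← sub_eq_zero, ← map_one (Ideal.Quotient.mk (Ideal.span {(2 : L)})), ← map_sub,
        hmk] at e00
      obtain ⟨c, hc⟩ := e00
      exact ⟨c, by linear_combination hc⟩
    · rw [e00, one_mul, hmk] at e01
      obtain ⟨c, rfl⟩ := e01
      exact hN c
  · have e10 := ent _ h 1 0
    simp [Matrix.mul_apply] at e10
    -- A unit divisible by `2` makes `2` invertible, and then `N` contains all elementary matrices.
    obtain ⟨c, hc⟩ := (hmk _).1 e10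
    have h1 : (2 : L) * (c * u) = 1 := by rw [← mul_assoc, ← hc, Units.inv_mul]
    have hall : ∀ a : L, x12 a ∈ N := fun a => by
      have := hN (c * u * a)
      rwa [← mul_assoc, h1, one_mul] at this
    have hall' : ∀ a : L, x21 a ∈ N := fun a => by
      have h2 : x21 a = weyl * x12 (-a) * weyl⁻¹ := by
        rw [eq_mul_inv_iff_mul_eq]
        ext i j; fin_cases i <;> fin_cases j <;> simp [Matrix.mul_apply]
      rw [h2]
      exact Subgroup.Normal.conj_mem ‹_› _ (hall _) _
    have : E2 L ≤ N := by
      rw [E2, Subgroup.closure_le]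
      rintro _ (⟨a, rfl⟩ | ⟨a, rfl⟩)
      · exact hall a
      · exact hall' a
    exact this (hL ▸ Subgroup.mem_top g)

end Bruhat

/-! ### Gluing along a fibre product -/

/-- The ring `R` embeds in `R' × L`, surjects onto both factors, and the kernel of `R → R'` maps
onto `2L`. In this situation the property `GE₂` passes from `R'` and `L` to `R`. -/
lemma glue {R R' L : Type*} [CommRing R] [CommRing R'] [CommRing L]
    (p : R →+* R') (q : R →+* L) (hp : Function.Surjective p) (hq : Function.Surjective q)
    (hinj : ∀ r, p r = 0 → q r = 0 → r = 0)
    (h2 : ∀ c : L, ∃ r, p r = 0 ∧ q r = 2 * c)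
    (h2' : ∀ r, p r = 0 → (2 : L) ∣ q r)
    (hmod : ∀ a : L, ∃ c, a = 2 * c ∨ ∃ u : Lˣ, a = u + 2 * c)
    (hR' : IsGE R' 2) (hL : IsGE L 2) : IsGE R 2 := by
  rw [isGE_iff] at hR' hL ⊢
  let P := SpecialLinearGroup.map (n := Fin 2) p
  let Q := SpecialLinearGroup.map (n := Fin 2) q
  let N : Subgroup (SpecialLinearGroup (Fin 2) L) := (E2 R ⊓ P.ker).map Q
  have hPE : (E2 R).map P = ⊤ := (map_E2 p hp).trans hR'
  have hQE : (E2 R).map Q = ⊤ := (map_E2 q hq).trans hL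
  have : N.Normal := by
    refine ⟨?_⟩
    rintro _ ⟨M, ⟨hM, hMP⟩, rfl⟩ g
    obtain ⟨G, hG, rfl⟩ : g ∈ (E2 R).map Q := hQE ▸ Subgroup.mem_top g
    refine ⟨G * M * G⁻¹, ⟨mul_mem (mul_mem hG hM) ((E2 R).inv_mem hG), ?_⟩, by simp⟩
    exact Subgroup.Normal.conj_mem inferInstance _ hMP _
  have hker : ∀ C, P C = 1 →
      Q C ∈ (SpecialLinearGroup.map (Ideal.Quotient.mk (Ideal.span {(2 : L)}))).ker := by
    intro C hC
    rw [MonoidHom.mem_ker]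
    ext i j
    have h1 : p (C.1 i j - (1 : Matrix (Fin 2) (Fin 2) R) i j) = 0 := by
      have := congrArg (fun M => M.1 i j) hC
      rw [map_sub, sub_eq_zero]
      simp only [P, SpecialLinearGroup.map_apply_coe, RingHom.mapMatrix_apply, Matrix.map_apply] at this
      rw [this]; fin_cases i <;> fin_cases j <;> simp
    have h3 := h2' _ h1
    rw [← Ideal.mem_span_singleton, ← Ideal.Quotient.eq_zero_iff_mem, map_sub, map_sub,
      sub_eq_zero] at h3
    simp only [Q, SpecialLinearGroup.map_apply_coe, RingHom.mapMatrix_apply, Matrix.map_apply]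
    rw [h3]; fin_cases i <;> fin_cases j <;> simp
  have hN := level_two_le hL hmod N
    (fun c => by
      obtain ⟨r, hr, hr'⟩ := h2 c
      refine ⟨x12 r, ⟨x12_mem r, ?_⟩, ?_⟩
      · exact (map_x12 p r).trans (by rw [hr, x12_zero])
      · exact (map_x12 q r).trans (by rw [hr']))
    (by
      rintro _ ⟨M, ⟨-, hMP⟩, rfl⟩
      exact hker M hMP)
  rw [eq_top_iff]
  rintro A -
  obtain ⟨B, hB, hBA⟩ : P A ∈ (E2 R).map P := hPE ▸ Subgroup.mem_top _
  have hC : P (A * B⁻¹) = 1 := by rw [map_mul, map_inv, hBA, mul_inv_cancel]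
  obtain ⟨M, ⟨hM, hMP⟩, hMQ⟩ := hN (hker _ hC)
  have hMC : M = A * B⁻¹ := by
    ext i j
    rw [← sub_eq_zero]
    apply hinj
    · rw [map_sub, sub_eq_zero]
      exact congrArg (fun M => M.1 i j) ((show P M = 1 from hMP).trans hC.symm)
    · rw [map_sub, sub_eq_zero]
      exact congrArg (fun M => M.1 i j) hMQ
  have : A = M * B := by rw [hMC, inv_mul_cancel_right]
  rw [this]
  exact mul_mem hM hB

/-! ### Euclidean rings -/

lemma weyl_mem {R : Type*} [CommRing R] : (weyl : SpecialLinearGroup (Fin 2) R) ∈ E2 R := by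
  have : (weyl : SpecialLinearGroup (Fin 2) R) = x12 1 * x21 (-1) * x12 1 := by
    ext i j; fin_cases i <;> fin_cases j <;> simp
  rw [this]
  exact mul_mem (mul_mem (x12_mem _) (x21_mem _)) (x12_mem _)

lemma isGE_of_euclid {L : Type*} [CommRing L] (N : L → ℕ)
    (hN : ∀ a b : L, b ≠ 0 → ∃ q, N (a - q * b) < N b) : IsGE L 2 := by
  rw [isGE_iff, eq_top_iff]
  have key : ∀ (n : ℕ) (A : SpecialLinearGroup (Fin 2) L), N (A.1 1 0) = n → A ∈ E2 L := by
    intro n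
    induction n using Nat.strong_induction_on with
    | _ n ih =>
      intro A hA
      by_cases h0 : A.1 1 0 = 0
      · have hdet := A.2
        rw [Matrix.det_fin_two, h0, mul_zero, sub_zero] at hdet
        let u : Lˣ := ⟨A.1 0 0, A.1 1 1, hdet, by rw [mul_comm]; exact hdet⟩
        have hAu : A = diagU u * x12 (A.1 1 1 * A.1 0 1) := by
          ext i j
          fin_cases i <;> fin_cases j <;> simp [u]
          · linear_combination (-(A.1 0 1)) * hdet
          · exact h0
        have hmem : ∀ a : L, x12 a ∈ E2 L := x12_mem
        rw [hAu, diagU_eq]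
        have hw := weyl_mem (R := L)
        exact mul_mem (mul_mem (mul_mem (mul_mem (mul_mem (mul_mem hw (hmem _)) hw) (hmem _)) hw)
          (hmem _)) (hmem _)
      · obtain ⟨q, hq⟩ := hN (A.1 0 0) (A.1 1 0) h0
        have h10 : (weyl * (weyl * (weyl * (x12 (-q) * A)))).1 1 0 = A.1 0 0 - q * A.1 1 0 := by
          simp [Matrix.mul_apply, Matrix.vecMul, Matrix.vecHead, Matrix.vecTail]
          ring
        have h := ih _ (hA ▸ hq) _ (congrArg N h10)
        have hw := weyl_mem (R := L)
        rwa [Subgroup.mul_mem_cancel_left _ hw, Subgroup.mul_mem_cancel_left _ hw,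
          Subgroup.mul_mem_cancel_left _ hw, Subgroup.mul_mem_cancel_left _ (x12_mem _)] at h
  intro A _
  exact key _ A rfl

/-- Only quotients of elements of `K` have to be approximated, so that the criterion also applies
to `K = ℤ`, which is not a lattice in `ℂ`. -/
lemma isGE_of_normSq (K : Subalgebra ℤ ℂ) (hint : ∀ x ∈ K, ∃ n : ℕ, Complex.normSq x = n)
    (hdiv : ∀ a ∈ K, ∀ b ∈ K, b ≠ 0 → ∃ q ∈ K, Complex.normSq (a / b - q) < 1) : IsGE K 2 := by
  refine isGE_of_euclid (fun x : K => ⌊Complex.normSq (x : ℂ)⌋₊) ?_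
  rintro ⟨a, ha⟩ ⟨b, hb⟩ hb0
  have hb0' : b ≠ 0 := fun h => hb0 (Subtype.ext h)
  obtain ⟨q, hq, hlt⟩ := hdiv a ha b hb hb0'
  refine ⟨⟨q, hq⟩, ?_⟩
  have h1 : Complex.normSq (a - q * b) < Complex.normSq b := by
    have : a - q * b = (a / b - q) * b := by field_simp
    rw [this, map_mul]
    have hpos := Complex.normSq_pos.2 hb0'
    nlinarith
  obtain ⟨n, hn⟩ := hint _ (sub_mem ha (mul_mem hq hb))
  obtain ⟨m, hm⟩ := hint _ hb
  change ⌊Complex.normSq (a - q * b)⌋₊ < ⌊Complex.normSq b⌋₊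
  rw [hn, hm] at h1 ⊢
  simpa using h1

/-! ### The rings `ℤ[ζ_e]` for `e ∈ {1, 2, 3, 6}` -/

lemma surj_aeval (e : ℕ) : Function.Surjective (aeval (R := ℤ) (zetaEl e)) := by
  rintro ⟨x, hx⟩
  have hx' := hx
  rw [Zzeta, Algebra.adjoin_singleton_eq_range_aeval] at hx'
  obtain ⟨p, hp⟩ := hx'
  refine ⟨p, Subtype.ext ?_⟩
  have := Polynomial.aeval_algHom_apply (Zzeta e).val (zetaEl e) p
  exact this.symm.trans hp

/-- The arithmetic of `ℤ` as `ℤ[ζ_e]` with `e ∈ {1, 2}`. -/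
lemma rational_case (e : ℕ) (s : ℤ) (h : zeta e = s) :
    IsGE (Zzeta e) 2 ∧ ∀ a : Zzeta e, ∃ c, a = 2 * c ∨ ∃ u : (Zzeta e)ˣ, a = u + 2 * c := by
  have hall : ∀ x ∈ Zzeta e, ∃ a : ℤ, x = a := by
    intro x hx
    have hle : Zzeta e ≤ ⊥ := by
      rw [Zzeta, Algebra.adjoin_le_iff, Set.singleton_subset_iff, h]
      exact ⟨s, by simp⟩
    obtain ⟨a, ha⟩ := hle hx
    exact ⟨a, by rw [← ha]; simp⟩
  constructor
  · apply isGE_of_normSq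
    · intro x hx
      obtain ⟨a, rfl⟩ := hall x hx
      refine ⟨(a * a).toNat, ?_⟩
      have h1 : ((a * a).toNat : ℤ) = a * a := Int.toNat_of_nonneg (mul_self_nonneg a)
      have h2 : (((a * a).toNat : ℤ) : ℝ) = a * a := by rw [h1]; push_cast; ring
      rw [Complex.normSq_intCast, ← h2]
      norm_cast
    · intro x hx y hy _
      obtain ⟨a, rfl⟩ := hall x hx
      obtain ⟨b, rfl⟩ := hall y hy
      refine ⟨(round ((a : ℝ) / b) : ℤ), intCast_mem _ _, ?_⟩
      have h1 : (a : ℂ) / b - (round ((a : ℝ) / b) : ℤ) =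
          (((a : ℝ) / b - (round ((a : ℝ) / b) : ℤ) : ℝ) : ℂ) := by push_cast; ring
      rw [h1, Complex.normSq_ofReal]
      have := abs_le.1 (abs_sub_round ((a : ℝ) / b))
      nlinarith [this.1, this.2]
  · rintro ⟨x, hx⟩
    obtain ⟨a, rfl⟩ := hall x hx
    have hx' : (⟨(a : ℂ), hx⟩ : Zzeta e) = a := Subtype.ext (by push_cast; rfl)
    rw [hx']
    rcases Int.even_or_odd' a with ⟨c, rfl | rfl⟩
    · exact ⟨(c : Zzeta e), Or.inl (by push_cast; ring)⟩
    · exact ⟨(c : Zzeta e), Or.inr ⟨1, by push_cast; ring⟩⟩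

/-- The arithmetic of the Eisenstein integers as `ℤ[ζ_e]` with `e ∈ {3, 6}`: rounding both
coordinates with respect to `1, ζ_e` leaves a remainder of norm at most `3/4`, and
`1, ζ_e, s - ζ_e = ζ_e⁻¹` represent the nonzero classes modulo `2`. -/
lemma eisenstein_case (e : ℕ) (s : ℤ) (hs : s = 1 ∨ s = -1) (hre : (zeta e).re = s / 2)
    (him : (zeta e).im = √3 / 2) :
    IsGE (Zzeta e) 2 ∧ ∀ a : Zzeta e, ∃ c, a = 2 * c ∨ ∃ u : (Zzeta e)ˣ, a = u + 2 * c := by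
  have h3 : √3 * √3 = (3 : ℝ) := Real.mul_self_sqrt (by norm_num)
  have h3pos : 0 < √3 := Real.sqrt_pos.2 (by norm_num)
  have hs2 : (s : ℝ) * s = 1 := by rcases hs with rfl | rfl <;> norm_num
  have hT : zeta e * zeta e = s * zeta e - 1 := by
    apply Complex.ext
    · simp [hre, him]; linear_combination (-1 / 4) * h3 - (1 / 4) * hs2
    · simp [hre, him]; ring
  have hall : ∀ x ∈ Zzeta e, ∃ a b : ℤ, x = a + b * zeta e := by
    intro x hx
    induction hx using Algebra.adjoin_induction with
    | mem x hx => exact ⟨0, 1, by rw [Set.mem_singleton_iff.1 hx]; simp⟩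
    | algebraMap r => exact ⟨r, 0, by simp⟩
    | add x y _ _ hx hy =>
      obtain ⟨a, b, rfl⟩ := hx
      obtain ⟨c, d, rfl⟩ := hy
      exact ⟨a + c, b + d, by push_cast; ring⟩
    | mul x y _ _ hx hy =>
      obtain ⟨a, b, rfl⟩ := hx
      obtain ⟨c, d, rfl⟩ := hy
      exact ⟨a * c - b * d, a * d + b * c + s * (b * d), by
        push_cast; linear_combination (b * d : ℂ) * hT⟩
  have hz : zeta e ∈ Zzeta e := Algebra.self_mem_adjoin_singleton ℤ _
  have hnorm : ∀ x y : ℝ, Complex.normSq (x + y * zeta e) = x * x + s * (x * y) + y * y := by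
    intro x y
    rw [Complex.normSq_apply]
    simp [hre, him]
    linear_combination (y * y / 4) * h3 + (y * y / 4) * hs2
  constructor
  · apply isGE_of_normSq
    · intro x hx
      obtain ⟨a, b, rfl⟩ := hall x hx
      have h0 := hnorm a b
      simp only [Complex.ofReal_intCast] at h0
      have hnn : 0 ≤ a * a + s * (a * b) + b * b := by
        have := Complex.normSq_nonneg (a + b * zeta e)
        rw [h0] at this
        exact_mod_cast this
      refine ⟨(a * a + s * (a * b) + b * b).toNat, ?_⟩
      have h2 : (((a * a + s * (a * b) + b * b).toNat : ℤ) : ℝ) = a * a + s * (a * b) + b * b := by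
        rw [Int.toNat_of_nonneg hnn]; push_cast; ring
      rw [h0, ← h2]
      norm_cast
    · intro x _ y _ _
      generalize x / y = z
      let v : ℝ := z.im * 2 / √3
      let w : ℝ := z.re - v * (s / 2)
      refine ⟨(round w : ℤ) + (round v : ℤ) * zeta e,
        add_mem (intCast_mem _ _) (mul_mem (intCast_mem _ _) hz), ?_⟩
      have hzv : z = w + v * zeta e := by
        apply Complex.ext
        · simp [hre, w]
        · simp [him, v]; field_simp
      have h1 : z - ((round w : ℤ) + (round v : ℤ) * zeta e) =
          ((w - (round w : ℤ) : ℝ) : ℂ) + ((v - (round v : ℤ) : ℝ) : ℂ) * zeta e := by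
        rw [hzv]; push_cast; ring
      rw [h1, hnorm]
      have a1 := abs_le.1 (abs_sub_round w)
      have a2 := abs_le.1 (abs_sub_round v)
      generalize w - (round w : ℤ) = ε at *
      generalize v - (round v : ℤ) = δ at *
      obtain ⟨b1, b2⟩ := a1
      obtain ⟨c1, c2⟩ := a2
      rcases hs with rfl | rfl <;> push_cast <;>
        nlinarith [mul_nonneg (sub_nonneg.2 b1) (sub_nonneg.2 b2),
          mul_nonneg (sub_nonneg.2 c1) (sub_nonneg.2 c2),
          sq_nonneg (ε - δ), sq_nonneg (ε + δ)]
  · have hTT : zetaEl e * zetaEl e = s * zetaEl e - 1 := Subtype.ext (by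
      push_cast; exact hT)
    let t : (Zzeta e)ˣ := ⟨zetaEl e, s - zetaEl e, by linear_combination -hTT,
      by linear_combination -hTT⟩
    have ht : (t : Zzeta e) = zetaEl e := rfl
    have ht' : ((t⁻¹ : (Zzeta e)ˣ) : Zzeta e) = s - zetaEl e := rfl
    rintro ⟨x, hx⟩
    obtain ⟨a, b, hab⟩ := hall x hx
    have hx' : (⟨x, hx⟩ : Zzeta e) = a + b * zetaEl e := Subtype.ext (by
      push_cast; exact hab)
    rw [hx']
    rcases Int.even_or_odd' a with ⟨c, rfl | rfl⟩ <;> rcases Int.even_or_odd' b with ⟨d, rfl | rfl⟩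
    · exact ⟨c + d * zetaEl e, Or.inl (by push_cast; ring)⟩
    · exact ⟨c + d * zetaEl e, Or.inr ⟨t, by rw [ht]; push_cast; ring⟩⟩
    · exact ⟨c + d * zetaEl e, Or.inr ⟨1, by push_cast; ring⟩⟩
    · rcases hs with rfl | rfl
      · exact ⟨c + d * zetaEl e + zetaEl e, Or.inr ⟨t⁻¹, by rw [ht']; push_cast; ring⟩⟩
      · exact ⟨c + d * zetaEl e + zetaEl e + 1, Or.inr ⟨t⁻¹, by rw [ht']; push_cast; ring⟩⟩

lemma arithmetic (e : ℕ) (heS : e ∈ ({1, 2, 3, 6} : Finset ℕ)) :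
    IsGE (Zzeta e) 2 ∧ ∀ a : Zzeta e, ∃ c, a = 2 * c ∨ ∃ u : (Zzeta e)ˣ, a = u + 2 * c := by
  have hexp : ∀ θ : ℝ, (2 * Real.pi * Complex.I / e : ℂ) = θ * Complex.I →
      zeta e = Complex.exp (θ * Complex.I) := fun θ h => by rw [zeta, h]
  simp only [Finset.mem_insert, Finset.mem_singleton] at heS
  rcases heS with rfl | rfl | rfl | rfl
  · refine rational_case 1 1 ?_
    rw [zeta, Nat.cast_one, div_one, Complex.exp_two_pi_mul_I, Int.cast_one]
  · refine rational_case 2 (-1) ?_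
    rw [hexp Real.pi (by push_cast; ring), Complex.exp_pi_mul_I]
    simp
  · have h := hexp (Real.pi - Real.pi / 3) (by push_cast; ring)
    refine eisenstein_case 3 (-1) (Or.inr rfl) ?_ ?_
    · rw [h, Complex.exp_ofReal_mul_I_re, Real.cos_pi_sub, Real.cos_pi_div_three]; norm_num
    · rw [h, Complex.exp_ofReal_mul_I_im, Real.sin_pi_sub, Real.sin_pi_div_three]
  · have h := hexp (Real.pi / 3) (by push_cast; ring)
    refine eisenstein_case 6 1 (Or.inl rfl) ?_ ?_
    · rw [h, Complex.exp_ofReal_mul_I_re, Real.cos_pi_div_three]; norm_num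
    · rw [h, Complex.exp_ofReal_mul_I_im, Real.sin_pi_div_three]

/-! ### Divisibility by cyclotomic polynomials -/

lemma cyclotomic_dvd_iff (e : ℕ) (he : 0 < e) (p : ℤ[X]) :
    cyclotomic e ℤ ∣ p ↔ aeval (zetaEl e) p = 0 := by
  have hprim : IsPrimitiveRoot (zeta e) e := Complex.isPrimitiveRoot_exp e he.ne'
  rw [cyclotomic_eq_minpoly hprim he, ← minpoly.isIntegrallyClosed_dvd_iff (hprim.isIntegral he)]
  have := Polynomial.aeval_algHom_apply (Zzeta e).val (zetaEl e) p
  rw [show zeta e = (Zzeta e).val (zetaEl e) from rfl, this]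
  exact ZeroMemClass.coe_eq_zero

lemma mem_iInf_iff (D : Finset ℕ) (p : ℤ[X]) :
    p ∈ (⨅ d ∈ D, Ideal.span {cyclotomic d ℤ}) ↔ ∀ d ∈ D, cyclotomic d ℤ ∣ p := by
  simp only [Submodule.mem_iInf, Ideal.mem_span_singleton]

/-- Distinct cyclotomic polynomials are non-associated primes of the factorial ring `ℤ[X]`. -/
lemma prod_cyclotomic_dvd (D : Finset ℕ) (hpos : ∀ d ∈ D, 0 < d) (p : ℤ[X])
    (h : ∀ d ∈ D, cyclotomic d ℤ ∣ p) : ∏ d ∈ D, cyclotomic d ℤ ∣ p := by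
  refine Finset.prod_dvd_of_isRelPrime ?_ h
  intro a ha b hb hab
  refine ((cyclotomic.irreducible (hpos a ha)).isRelPrime_iff_not_dvd).2 fun hdvd => hab ?_
  have hass := (cyclotomic.irreducible (hpos a ha)).associated_of_dvd
    (cyclotomic.irreducible (hpos b hb)) hdvd
  exact cyclotomic_injective
    (eq_of_monic_of_associated (cyclotomic.monic a ℤ) (cyclotomic.monic b ℤ) hass)

end GE2Gluing

/-- If `e ∈ D ∩ {1,2,3,6}`, `η_e ℤ[ζ_e] = 2 ℤ[ζ_e]`, and `O(D \ {e})` is a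
`GE_2`-ring, then `O(D)` is a `GE_2`-ring. -/
theorem stmt_11 (D : Finset ℕ) (hpos : ∀ d ∈ D, 0 < d) (hcard : 2 ≤ D.card)
    (e : ℕ) (he : e ∈ D) (heS : e ∈ ({1, 2, 3, 6} : Finset ℕ))
    (heta : Ideal.span {eta D e} = Ideal.span {(2 : Zzeta e)})
    (hGE : IsGE (Polynomial ℤ ⧸
      (⨅ d ∈ D.erase e, Ideal.span {Polynomial.cyclotomic d ℤ})) 2) :
    IsGE (Polynomial ℤ ⧸ (⨅ d ∈ D, Ideal.span {Polynomial.cyclotomic d ℤ})) 2 := by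
  classical
  have he0 := hpos e he
  obtain ⟨hL, hmod⟩ := GE2Gluing.arithmetic e heS
  have hpos' : ∀ d ∈ D.erase e, 0 < d := fun d hd => hpos d (Finset.mem_of_mem_erase hd)
  have hle : (⨅ d ∈ D, Ideal.span {cyclotomic d ℤ}) ≤
      ⨅ d ∈ D.erase e, Ideal.span {cyclotomic d ℤ} := fun p hp => by
    rw [GE2Gluing.mem_iInf_iff] at hp ⊢
    exact fun d hd => hp d (Finset.mem_of_mem_erase hd)
  have hker : ∀ p ∈ (⨅ d ∈ D, Ideal.span {cyclotomic d ℤ}),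
      (aeval (R := ℤ) (zetaEl e)).toRingHom p = 0 := fun p hp =>
    (GE2Gluing.cyclotomic_dvd_iff e he0 p).1 ((GE2Gluing.mem_iInf_iff D p).1 hp e he)
  have heta' : aeval (zetaEl e) (∏ d ∈ D.erase e, cyclotomic d ℤ) = eta D e := by
    rw [map_prod]; rfl
  refine GE2Gluing.glue (Ideal.Quotient.factor hle)
    (Ideal.Quotient.lift _ (aeval (R := ℤ) (zetaEl e)).toRingHom hker)
    (Ideal.Quotient.factor_surjective hle)
    (Ideal.Quotient.lift_surjective_of_surjective _ hker (GE2Gluing.surj_aeval e))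
    ?_ ?_ ?_ hmod hGE hL
  · intro r h1 h2
    obtain ⟨p, rfl⟩ := Ideal.Quotient.mk_surjective r
    rw [Ideal.Quotient.factor_mk, Ideal.Quotient.eq_zero_iff_mem, GE2Gluing.mem_iInf_iff] at h1
    rw [Ideal.Quotient.lift_mk] at h2
    rw [Ideal.Quotient.eq_zero_iff_mem, GE2Gluing.mem_iInf_iff]
    intro d hd
    by_cases hde : d = e
    · subst hde
      exact (GE2Gluing.cyclotomic_dvd_iff d he0 p).2 h2
    · exact h1 d (Finset.mem_erase.2 ⟨hde, hd⟩)
  · intro c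
    have h2 : (2 : Zzeta e) * c ∈ Ideal.span {eta D e} :=
      heta ▸ Ideal.mul_mem_right _ _ (Ideal.mem_span_singleton_self _)
    obtain ⟨b, hb⟩ := Ideal.mem_span_singleton.1 h2
    obtain ⟨p, rfl⟩ := GE2Gluing.surj_aeval e b
    refine ⟨Ideal.Quotient.mk _ ((∏ d ∈ D.erase e, cyclotomic d ℤ) * p), ?_, ?_⟩
    · rw [Ideal.Quotient.factor_mk, Ideal.Quotient.eq_zero_iff_mem, GE2Gluing.mem_iInf_iff]
      exact fun d hd => (Finset.dvd_prod_of_mem _ hd).mul_right _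
    · rw [Ideal.Quotient.lift_mk, hb, ← heta']
      exact map_mul (aeval (R := ℤ) (zetaEl e)) _ _
  · intro r h1
    obtain ⟨p, rfl⟩ := Ideal.Quotient.mk_surjective r
    rw [Ideal.Quotient.factor_mk, Ideal.Quotient.eq_zero_iff_mem, GE2Gluing.mem_iInf_iff] at h1
    obtain ⟨b, rfl⟩ := GE2Gluing.prod_cyclotomic_dvd _ hpos' p h1
    rw [Ideal.Quotient.lift_mk, ← Ideal.mem_span_singleton, ← heta, Ideal.mem_span_singleton,
      ← heta']
    exact ⟨aeval (zetaEl e) b, map_mul (aeval (R := ℤ) (zetaEl e)) _ _⟩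
end
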